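/- arXiv:1610.02676 — 2 statements merged into one kernel-verified Lean document; each statement's English description precedes it below -/
import Mathlib

section
/- There exist absolute constants δ₀ > 0 and c > 0 such that for every even integer s ≥ 400, setting p = 2^{-s}, there exists a bipartite graph G of density p with the following property: for every graph G' on V(G) with |E(G) △ E(G')| ≤ δ₀|E(G)| and every p⁵-regular partition Z of V(G') (not necessarily equitable), the number of parts of Z is at least twr(c·log₂(1/p)). -/
/-!
Take `t = s / 32`. A vertex has coordinates `a_0, …, a_t`, masks `out` and `inn`, a tag and a side.
Each value of `a_{i+1}` names a word whose positions are the values of `a_i`, and the difference of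
any two such words is spread out: no letter fills more than a quarter of it. As exponentially many
such words exist, the ranges of `a_0, …, a_t` grow like a tower. Two vertices with the same tag on
opposite sides are adjacent if, for each `i`, the letter that the word named by `a_{i+1}` of one of
them has at the position `a_i` of the other is the sum of the mask `out` of the first and the mask
`inn` of the second. The masks make the graph regular and sparse.

Let `Z` be a part of a regular partition. The depth of `x ∈ Z` is the last level `i ≤ t` such that
at least an eighth of `Z` agrees with `x` in `a_1, …, a_i`. If `i < t`, then more than seven eighths
of the vertices `x' ∈ Z` name a word different from that of `x` at some level up to `i + 1`, and
such an `x'` has neighbours in the classes of at most a quarter of the neighbours of `x`, where the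
class of a vertex consists of everything but `a_{i+1}, …, a_t`. Within one part, the vertices of
depth at least `i` have at most eight values of `a_1, …, a_i`, hence lie in few classes. For few
classes the error terms of regularity are small, so the edges from `x` to vertices of depth at least
`i`, up to three eighths of its degree, have to be paid for by modifications or by irregular pairs.

Charging every edge to its endpoint of lower depth, one finds that at least half of the vertices
have depth `t`. A part has at most eight values of `a_1, …, a_t` at its vertices of depth `t`, so
the number of parts is at least a constant times the number of values of `a_t`.
-/

open Finset
open scoped Classical

/-- `eCnt G A B` is the number of ordered pairs `(u,v) ∈ A × B` with `uv` an edge of `G`. -/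
noncomputable def eCnt {V : Type*} [Fintype V] (G : SimpleGraph V) (A B : Finset V) : ℕ :=
  ((A ×ˢ B).filter fun p => G.Adj p.1 p.2).card

/-- The edge density `d_G(A,B)` between vertex subsets `A` and `B`. -/
noncomputable def dens {V : Type*} [Fintype V] (G : SimpleGraph V) (A B : Finset V) : ℝ :=
  eCnt G A B / (A.card * B.card)

/-- The pair `(A,B)` is `ε`-regular. -/
def RegPair {V : Type*} [Fintype V] (G : SimpleGraph V) (ε : ℝ) (A B : Finset V) : Prop :=
  ∀ A' ⊆ A, ∀ B' ⊆ B, ε * A.card ≤ A'.card → ε * B.card ≤ B'.card →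
    |dens G A B - dens G A' B'| ≤ ε

/-- The density `d_G = 2|E|/|V|²` of a graph. -/
noncomputable def graphDensity {V : Type*} [Fintype V] (G : SimpleGraph V) : ℝ :=
  2 * G.edgeSet.ncard / (Fintype.card V : ℝ) ^ 2

/-- A (not necessarily equitable) vertex partition `P` is `ε`-regular if the sum of
`|Z||Z'|` over ordered pairs of parts `(Z,Z')` that are not `ε`-regular is at most `ε n²`. -/
def IsRegularPartitionW {V : Type*} [Fintype V] [DecidableEq V] (G : SimpleGraph V)
    (ε : ℝ) (P : Finpartition (univ : Finset V)) : Prop :=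
  ∑ pq ∈ (P.parts ×ˢ P.parts).filter (fun pq => ¬ RegPair G ε pq.1 pq.2),
      ((pq.1.card : ℝ) * pq.2.card) ≤ ε * (Fintype.card V : ℝ) ^ 2

/-- `twr x` is a tower of twos of height `x`. -/
def twr : ℕ → ℕ
  | 0 => 1
  | n + 1 => 2 ^ twr n

open scoped symmDiff

/-! ### Codes whose differences are spread out -/

section Code

lemma exists_card_eq_pairwise_not {α : Type*} [Fintype α] {r : α → α → Prop}
    (hrefl : ∀ a, r a a) (hsymm : ∀ {a b}, r a b → r b a) {B : ℕ} (hB : 0 < B)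
    (hball : ∀ a, #{b | r a b} ≤ B) {m : ℕ} (hm : m * B ≤ Fintype.card α) :
    ∃ C : Finset α, #C = m ∧ (C : Set α).Pairwise fun a b => ¬ r a b := by
  induction m with
  | zero => exact ⟨∅, by simp⟩
  | succ m ih =>
    obtain ⟨C, hC, hpair⟩ := ih (by linarith [add_one_mul m B])
    have hcover : #(C.biUnion fun a => {b | r a b}) < #(univ : Finset α) := by
      calc _ ≤ #C * B := card_biUnion_le_card_mul _ _ _ fun a _ => hball a
        _ < #(univ : Finset α) := by rw [hC, card_univ]; linarith [add_one_mul m B]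
    obtain ⟨b, -, hb⟩ := exists_mem_notMem_of_card_lt_card hcover
    have hfar : ∀ a ∈ C, ¬ r a b := fun a ha hab => hb (mem_biUnion.2 ⟨a, ha, by simpa using hab⟩)
    have hbC : b ∉ C := fun hbC => hfar b hbC (hrefl b)
    refine ⟨insert b C, by rw [card_insert_of_notMem hbC, hC], ?_⟩
    rw [coe_insert, Set.pairwise_insert_of_notMem (by simpa using hbC)]
    exact ⟨hpair, fun a ha => ⟨fun hba => hfar a ha (hsymm hba), hfar a ha⟩⟩

variable {ι F : Type*} [Fintype ι]

/-- Two words `f`, `g` over an abelian group are close if their difference takes some value, not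
necessarily `0`, on more than a quarter of the positions. -/
def IsClose [AddCommGroup F] (f g : ι → F) : Prop :=
  ∃ k, Fintype.card ι < 4 * #{u | g u - f u = k}

lemma IsClose.refl [AddCommGroup F] [Nonempty ι] (f : ι → F) : IsClose f f :=
  ⟨0, by simp [Fintype.card_pos (α := ι)]⟩

lemma IsClose.symm [AddCommGroup F] {f g : ι → F} : IsClose f g → IsClose g f := by
  rintro ⟨k, hk⟩
  refine ⟨-k, hk.trans_eq ?_⟩
  simp only [← neg_sub (g _) (f _), neg_inj]

lemma card_filter_eqOn [Fintype F] (f : ι → F) (S : Finset ι) :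
    #{g : ι → F | ∀ u ∈ S, g u = f u} = Fintype.card F ^ (Fintype.card ι - #S) := by
  have hpi : ({g | ∀ u ∈ S, g u = f u} : Finset (ι → F)) =
      Fintype.piFinset fun u => if u ∈ S then {f u} else univ := by
    ext g
    simp only [mem_filter_univ, Fintype.mem_piFinset]
    refine forall_congr' fun u => ?_
    split_ifs with hu <;> simp [hu]
  rw [hpi, Fintype.card_piFinset]
  simp only [apply_ite card, card_singleton, card_univ, prod_ite, prod_const, one_pow, one_mul]
  rw [← card_compl, compl_eq_univ_sdiff, sdiff_eq_filter]

/-- A word close to `f` is given by the repeated difference, a set of `⌈n / 4⌉` or more positions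
where it occurs, and the letters elsewhere. -/
lemma card_isClose_le [AddCommGroup F] [Fintype F] (f : ι → F) :
    #{g | IsClose f g} ≤ Fintype.card F * 2 ^ Fintype.card ι *
      Fintype.card F ^ (3 * Fintype.card ι / 4) := by
  let large : Finset (Finset ι) := {S | Fintype.card ι < 4 * #S}
  have hcover : ({g | IsClose f g} : Finset (ι → F)) ⊆
      ((univ : Finset F) ×ˢ large).biUnion fun kS => {g | ∀ u ∈ kS.2, g u = kS.1 + f u} := by
    intro g hg
    obtain ⟨k, hk⟩ := (mem_filter_univ g).1 hg
    refine mem_biUnion.2 ⟨(k, univ.filter fun u => g u - f u = k), by simpa [large] using hk, ?_⟩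
    simp [sub_eq_iff_eq_add]
  have hpiece : ∀ kS ∈ (univ : Finset F) ×ˢ large, #{g : ι → F | ∀ u ∈ kS.2, g u = kS.1 + f u} ≤
      Fintype.card F ^ (3 * Fintype.card ι / 4) := by
    rintro ⟨k, S⟩ hkS
    have hS : Fintype.card ι < 4 * #S := by simpa [large] using hkS
    exact (card_filter_eqOn (fun u => k + f u) S).trans_le
      (Nat.pow_le_pow_right Fintype.card_pos (by omega))
  have hlarge : #large ≤ 2 ^ Fintype.card ι := (card_le_univ _).trans_eq Fintype.card_finset
  calc #{g | IsClose f g}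
      ≤ #((univ : Finset F) ×ˢ large) * Fintype.card F ^ (3 * Fintype.card ι / 4) :=
        (card_le_card hcover).trans (card_biUnion_le_card_mul _ _ _ hpiece)
    _ ≤ _ := by rw [card_product, card_univ]; gcongr

/-- Gilbert–Varshamov: there are `2 ^ (8 n)` words, and the words close to a given one number at
most `2 ^ (7 n + 8)`. -/
lemma exists_code [AddCommGroup F] [Fintype F] (hF : Fintype.card F = 2 ^ 8)
    (hι : 8 ≤ Fintype.card ι) :
    ∃ w : Fin (2 ^ (Fintype.card ι - 8)) → ι → F, Pairwise fun a b => ¬ IsClose (w a) (w b) := by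
  set n := Fintype.card ι
  have : Nonempty ι := Fintype.card_pos_iff.1 (by omega)
  have hball : ∀ f : ι → F, #{g | IsClose f g} ≤ 2 ^ (7 * n + 8) := by
    intro f
    refine (card_isClose_le f).trans ?_
    rw [hF, ← pow_mul, ← pow_add, ← pow_add]
    exact Nat.pow_le_pow_right two_pos (by omega)
  have hm : 2 ^ (n - 8) * 2 ^ (7 * n + 8) ≤ Fintype.card (ι → F) := by
    rw [Fintype.card_fun, hF, ← pow_mul, ← pow_add]
    exact Nat.pow_le_pow_right two_pos (by omega)
  obtain ⟨C, hC, hfar⟩ :=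
    exists_card_eq_pairwise_not IsClose.refl IsClose.symm (by positivity) hball hm
  let e := C.equivFinOfCardEq hC
  exact ⟨fun a => e.symm a, fun a b hab => hfar (e.symm a).2 (e.symm b).2
    fun h => hab (e.symm.injective (Subtype.ext h))⟩

/-- The number of values of the `i`-th coordinate of a vertex of the graph. Each value of coordinate
`i + 1` names a word of length `codeSize i`. -/
def codeSize : ℕ → ℕ
  | 0 => 16
  | i + 1 => 2 ^ (codeSize i - 8)

lemma sixteen_mul_twr_succ_le (i : ℕ) (h : twr i + 12 ≤ codeSize i) :
    16 * twr (i + 1) ≤ codeSize (i + 1) :=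
  calc 16 * twr (i + 1) = 2 ^ (twr i + 4) := by rw [twr]; ring
    _ ≤ codeSize (i + 1) := Nat.pow_le_pow_right two_pos (by omega)

lemma twr_add_twelve_le_codeSize (i : ℕ) : twr i + 12 ≤ codeSize i := by
  induction i with
  | zero => simp [twr, codeSize]
  | succ i ih =>
    have hpos : 1 ≤ twr (i + 1) := Nat.one_le_two_pow
    linarith [sixteen_mul_twr_succ_le i ih]

lemma sixteen_mul_twr_le_codeSize {i : ℕ} (hi : i ≠ 0) : 16 * twr i ≤ codeSize i := by
  obtain ⟨j, rfl⟩ := Nat.exists_eq_succ_of_ne_zero hi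
  exact sixteen_mul_twr_succ_le j (twr_add_twelve_le_codeSize j)

end Code

/-! ### Edge counts -/

section EdgeCount

lemma edgeSet_symmDiff {V : Type*} (G G' : SimpleGraph V) :
    (G ∆ G').edgeSet = G.edgeSet ∆ G'.edgeSet := by
  simp only [symmDiff, SimpleGraph.edgeSet_sup, SimpleGraph.edgeSet_sdiff, Set.sup_eq_union]

variable {V κ : Type*} [Fintype V] (G G' : SimpleGraph V) (A B : Finset V)

lemma eCnt_eq_sum_left : eCnt G A B = ∑ x ∈ A, #{y ∈ B | G.Adj x y} := by
  simp only [eCnt, card_filter, sum_product]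

lemma eCnt_eq_sum_right : eCnt G A B = ∑ y ∈ B, #{x ∈ A | G.Adj x y} := by
  simp only [eCnt, card_filter, sum_product_right]

lemma eCnt_le_card_mul_card : eCnt G A B ≤ #A * #B :=
  (card_filter_le _ _).trans_eq (card_product A B)

variable {A B} in
lemma eCnt_mono {A' B' : Finset V} (hA : A ⊆ A') (hB : B ⊆ B') : eCnt G A B ≤ eCnt G A' B' :=
  card_le_card (filter_subset_filter _ (product_subset_product hA hB))

lemma eCnt_le_add_eCnt_symmDiff : eCnt G A B ≤ eCnt G' A B + eCnt (G ∆ G') A B := by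
  refine le_trans (card_le_card ?_) (card_union_le _ _)
  intro e he
  simp only [mem_union, mem_filter, symmDiff, SimpleGraph.sup_adj, SimpleGraph.sdiff_adj] at he ⊢
  tauto

lemma dens_mul_card_mul_card : dens G A B * (#A * #B) = eCnt G A B := by
  have h : (eCnt G A B : ℝ) ≤ #A * #B := mod_cast eCnt_le_card_mul_card G A B
  refine div_mul_cancel_of_imp fun h0 => ?_
  rw [h0] at h
  exact le_antisymm h (Nat.cast_nonneg _)

lemma sum_eCnt_fiber [DecidableEq κ] {q : V → κ} {S : Finset κ} (h : ∀ y ∈ B, q y ∈ S) :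
    ∑ k ∈ S, eCnt G A {y ∈ B | q y = k} = eCnt G A B := by
  simp only [eCnt_eq_sum_right]
  exact sum_fiberwise_of_maps_to h _

lemma eCnt_univ_univ : eCnt G univ univ = 2 * G.edgeSet.ncard := by
  rw [Set.ncard_eq_toFinset_card', eCnt_eq_sum_left]
  exact Eq.trans (by simp [← SimpleGraph.card_neighborFinset_eq_degree,
    SimpleGraph.neighborFinset_eq_filter]) G.sum_degrees_eq_twice_card_edges

end EdgeCount

section Partition

variable {V : Type*} [Fintype V] [DecidableEq V] (P : Finpartition (univ : Finset V))

lemma sum_parts_sum {M : Type*} [AddCommMonoid M] (f : V → M) :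
    ∑ W ∈ P.parts, ∑ y ∈ W, f y = ∑ y, f y := by
  calc ∑ W ∈ P.parts, ∑ y ∈ W, f y = ∑ y ∈ P.parts.biUnion id, f y :=
        (sum_biUnion P.disjoint).symm
    _ = ∑ y, f y := by rw [P.biUnion_parts]

lemma sum_parts_card : ∑ W ∈ P.parts, (#W : ℝ) = Fintype.card V := by
  exact_mod_cast P.sum_card_parts

lemma sum_parts_eCnt_right (G : SimpleGraph V) (A : Finset V) :
    ∑ W ∈ P.parts, eCnt G A W = eCnt G A univ := by
  simp only [eCnt_eq_sum_right, sum_parts_sum]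

lemma sum_parts_eCnt_left (G : SimpleGraph V) (B : Finset V) :
    ∑ W ∈ P.parts, eCnt G W B = eCnt G univ B := by
  simp only [eCnt_eq_sum_left, sum_parts_sum]

end Partition

/-! ### Regular pairs with an edgeless sub-pair -/

section Regularity

variable {V κ : Type*} [Fintype V] {G G' : SimpleGraph V} {ε : ℝ} {A B U Q T : Finset V}

lemma RegPair.mono {ε' : ℝ} (hεε' : ε ≤ ε') (h : RegPair G ε A B) : RegPair G ε' A B := by
  intro A' hA B' hB hA' hB'
  refine (h A' hA B' hB (le_trans ?_ hA') (le_trans ?_ hB')).trans hεε' <;> gcongr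

lemma IsRegularPartitionW.mono [DecidableEq V] {P : Finpartition (univ : Finset V)} {ε' : ℝ}
    (hεε' : ε ≤ ε') (hP : IsRegularPartitionW G ε P) : IsRegularPartitionW G ε' P :=
  calc _ ≤ ∑ pq ∈ (P.parts ×ˢ P.parts).filter (fun pq => ¬ RegPair G ε pq.1 pq.2),
        ((#pq.1 : ℝ) * #pq.2) :=
        sum_le_sum_of_subset_of_nonneg
          (monotone_filter_right _ fun _ _ => mt (RegPair.mono hεε')) fun _ _ _ => by positivity
    _ ≤ ε * (Fintype.card V : ℝ) ^ 2 := hP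
    _ ≤ ε' * (Fintype.card V : ℝ) ^ 2 := by gcongr

lemma RegPair.card_mul_eCnt_le (h : RegPair G ε A B) (hε : 0 ≤ ε) (hU : U ⊆ A) (hQ : Q ⊆ A)
    (hT : T ⊆ B) :
    (#Q * eCnt G U T : ℝ) ≤ #U * eCnt G Q T + ε * #A * (2 * #A * #T + #U * #B) := by
  have hUA : (#U : ℝ) ≤ #A := mod_cast card_le_card hU
  have hQA : (#Q : ℝ) ≤ #A := mod_cast card_le_card hQ
  have heU : (eCnt G U T : ℝ) ≤ #U * #T := mod_cast eCnt_le_card_mul_card G U T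
  suffices hmain : (#Q * eCnt G U T : ℝ) ≤ #U * eCnt G Q T + 2 * ε * (#A * #A * #T) ∨
      (#Q * (#U * #T) : ℝ) ≤ ε * (#A * #A * #T) ∨ (#Q * (#U * #T) : ℝ) ≤ ε * (#A * #U * #B) by
    have hAT : 0 ≤ ε * (#A * #A * #T : ℝ) := by positivity
    have hUB : 0 ≤ ε * (#A * #U * #B : ℝ) := by positivity
    have hle : (#Q * eCnt G U T : ℝ) ≤ #Q * (#U * #T) := by gcongr
    have hnonneg : (0 : ℝ) ≤ #U * eCnt G Q T := by positivity
    rcases hmain with h | h | h <;> linarith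
  rcases lt_or_ge (#U : ℝ) (ε * #A) with hUs | hUs
  · right; left
    calc (#Q * (#U * #T) : ℝ) ≤ #A * (ε * #A * #T) := by gcongr
      _ = _ := by ring
  rcases lt_or_ge (#Q : ℝ) (ε * #A) with hQs | hQs
  · right; left
    calc (#Q * (#U * #T) : ℝ) ≤ ε * #A * (#A * #T) := by gcongr
      _ = _ := by ring
  rcases lt_or_ge (#T : ℝ) (ε * #B) with hTs | hTs
  · right; right
    calc (#Q * (#U * #T) : ℝ) ≤ #A * (#U * (ε * #B)) := by gcongr
      _ = _ := by ring
  left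
  have hdens : dens G U T ≤ dens G Q T + 2 * ε := by
    linarith [abs_le.1 (h U hU T hT hUs hTs), abs_le.1 (h Q hQ T hT hQs hTs)]
  rw [← dens_mul_card_mul_card G U, ← dens_mul_card_mul_card G Q]
  calc (#Q * (dens G U T * (#U * #T)) : ℝ)
      ≤ #Q * ((dens G Q T + 2 * ε) * (#U * #T)) := by gcongr
    _ = #U * (dens G Q T * (#Q * #T)) + 2 * ε * (#Q * #U * #T) := by ring
    _ ≤ _ := by gcongr

/-- The indicator that the pair `(A, B)` is not `ε`-regular. -/
noncomputable def irregular (G : SimpleGraph V) (ε : ℝ) (A B : Finset V) : ℝ :=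
  if RegPair G ε A B then 0 else 1

lemma irregular_nonneg (G : SimpleGraph V) (ε : ℝ) (A B : Finset V) : 0 ≤ irregular G ε A B := by
  unfold irregular
  split_ifs <;> norm_num

lemma IsRegularPartitionW.sum_irregular_le [DecidableEq V] {P : Finpartition (univ : Finset V)}
    (hP : IsRegularPartitionW G ε P) :
    ∑ Z ∈ P.parts, #Z * ∑ W ∈ P.parts, irregular G ε Z W * #W ≤ ε * Fintype.card V ^ 2 := by
  refine le_trans (le_of_eq ?_) hP
  rw [sum_filter, sum_product]
  refine sum_congr rfl fun Z _ => ?_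
  rw [mul_sum]
  refine sum_congr rfl fun W _ => ?_
  by_cases hreg : RegPair G ε Z W <;> simp [irregular, hreg]

lemma card_mul_eCnt_le (hε : 0 ≤ ε) (hU : U ⊆ A) (hQ : Q ⊆ A) (hT : T ⊆ B) :
    (#Q * eCnt G U T : ℝ) ≤ #U * eCnt G Q T + ε * #A * (2 * #A * #T + #U * #B) +
      irregular G ε A B * #A * #U * #T := by
  by_cases h : RegPair G ε A B
  · simpa [irregular, h] using h.card_mul_eCnt_le hε hU hQ hT
  · have hQA : (#Q : ℝ) ≤ #A := mod_cast card_le_card hQ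
    have heU : (eCnt G U T : ℝ) ≤ #U * #T := mod_cast eCnt_le_card_mul_card G U T
    calc (#Q * eCnt G U T : ℝ) ≤ #A * (#U * #T) := by gcongr
      _ ≤ _ := by
        rw [irregular, if_neg h, one_mul, mul_assoc (#A : ℝ)]
        exact le_add_of_nonneg_left (by positivity)

/-- If `G` has no edge between `Q` and `T`, then regularity of `G'` forces the edges of `G` between
`U` and `T` to be paid for by modifications. -/
lemma card_mul_eCnt_le_of_forall_not_adj (hε : 0 ≤ ε) (hU : U ⊆ A) (hQ : Q ⊆ A) (hT : T ⊆ B)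
    (hQT : ∀ x ∈ Q, ∀ y ∈ T, ¬ G.Adj x y) :
    (#Q * eCnt G U T : ℝ) ≤ #A * eCnt (G ∆ G') U T + #U * eCnt (G ∆ G') A T +
      ε * #A * (2 * #A * #T + #U * #B) + irregular G' ε A B * #A * #U * #T := by
  have hQA : (#Q : ℝ) ≤ #A := mod_cast card_le_card hQ
  have hGU : (eCnt G U T : ℝ) ≤ eCnt G' U T + eCnt (G ∆ G') U T :=
    mod_cast eCnt_le_add_eCnt_symmDiff G G' U T
  have hGQ : eCnt G Q T = 0 := by simpa [eCnt, filter_eq_empty_iff] using fun x y hx => hQT x hx y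
  have hG'Q : (eCnt G' Q T : ℝ) ≤ eCnt (G ∆ G') A T := by
    have h := eCnt_le_add_eCnt_symmDiff G' G Q T
    rw [hGQ, zero_add, symmDiff_comm] at h
    exact_mod_cast h.trans (eCnt_mono _ hQ Subset.rfl)
  calc (#Q * eCnt G U T : ℝ)
      ≤ #Q * eCnt G' U T + #Q * eCnt (G ∆ G') U T := by rw [← mul_add]; gcongr
    _ ≤ (#U * eCnt G' Q T + ε * #A * (2 * #A * #T + #U * #B) + irregular G' ε A B * #A * #U * #T) +
        #A * eCnt (G ∆ G') U T := by gcongr; exact card_mul_eCnt_le hε hU hQ hT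
    _ ≤ (#U * eCnt (G ∆ G') A T + ε * #A * (2 * #A * #T + #U * #B) +
        irregular G' ε A B * #A * #U * #T) + #A * eCnt (G ∆ G') U T := by gcongr
    _ = _ := by ring

/-- The vertex `x` has a neighbour in the class of `y`, where `q` gives the class of a vertex. -/
def MeetsClass (G : SimpleGraph V) (q : V → κ) (x y : V) : Prop :=
  ∃ y', q y' = q y ∧ G.Adj x y'

lemma sum_card_not_meetsClass_mul_le [DecidableEq κ] (q : V → κ) {M : ℕ} (hM : #(T.image q) ≤ M)
    (hε : 0 ≤ ε) (hU : U ⊆ A) (hT : T ⊆ B) :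
    (∑ y ∈ T, #{x ∈ A | ¬ MeetsClass G q x y} * #{x ∈ U | G.Adj x y} : ℝ) ≤
      #A * eCnt (G ∆ G') U B + #U * eCnt (G ∆ G') A B + ε * #A * (2 * #A * #B + M * #U * #B) +
        irregular G' ε A B * #A * #U * #B := by
  let cls (k : κ) : Finset V := {y ∈ T | q y = k}
  let avoid (k : κ) : Finset V := {x ∈ A | ¬ ∃ y, q y = k ∧ G.Adj x y}
  have hmaps : ∀ y ∈ T, q y ∈ T.image q := fun y hy => mem_image_of_mem q hy
  have hclass (k : κ) : (#(avoid k) * eCnt G U (cls k) : ℝ) ≤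
      #A * eCnt (G ∆ G') U (cls k) + #U * eCnt (G ∆ G') A (cls k) +
        ε * #A * (2 * #A * #(cls k) + #U * #B) + irregular G' ε A B * #A * #U * #(cls k) :=
    card_mul_eCnt_le_of_forall_not_adj hε hU (filter_subset _ _) ((filter_subset _ _).trans hT)
      fun x hx y hy hxy => (mem_filter.1 hx).2 ⟨y, (mem_filter.1 hy).2, hxy⟩
  have hsum (C : Finset V) : ∑ k ∈ T.image q, (eCnt (G ∆ G') C (cls k) : ℝ) ≤ eCnt (G ∆ G') C B :=
    mod_cast (sum_eCnt_fiber _ C T hmaps).trans_le (eCnt_mono _ Subset.rfl hT)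
  have hcard : ∑ k ∈ T.image q, (#(cls k) : ℝ) ≤ #B :=
    mod_cast (card_eq_sum_card_fiberwise hmaps).symm.trans_le (card_le_card hT)
  have hM' : (#(T.image q) : ℝ) ≤ M := mod_cast hM
  have hirr := irregular_nonneg G' ε A B
  calc (∑ y ∈ T, #{x ∈ A | ¬ MeetsClass G q x y} * #{x ∈ U | G.Adj x y} : ℝ)
      = ∑ k ∈ T.image q, (#(avoid k) * eCnt G U (cls k) : ℝ) := by
        rw [← sum_fiberwise_of_maps_to hmaps]
        refine sum_congr rfl fun k _ => ?_
        rw [eCnt_eq_sum_right, Nat.cast_sum, mul_sum]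
        refine sum_congr rfl fun y hy => ?_
        simp only [MeetsClass, (mem_filter.1 hy).2, avoid]
    _ ≤ _ := sum_le_sum fun k _ => hclass k
    _ = #A * ∑ k ∈ T.image q, (eCnt (G ∆ G') U (cls k) : ℝ) +
        #U * ∑ k ∈ T.image q, (eCnt (G ∆ G') A (cls k) : ℝ) +
        ε * #A * (2 * #A * ∑ k ∈ T.image q, (#(cls k) : ℝ) + #(T.image q) * (#U * #B)) +
        irregular G' ε A B * #A * #U * ∑ k ∈ T.image q, (#(cls k) : ℝ) := by
      simp only [sum_add_distrib, ← mul_sum, sum_const, nsmul_eq_mul]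
      ring
    _ ≤ _ := by
      rw [mul_assoc (M : ℝ)]
      gcongr
      exacts [hsum U, hsum A]

end Regularity

/-! ### Popular values and depth -/

section Popular

variable {V κ κ' η : Type*} [Fintype V] [DecidableEq V] {P : Finpartition (univ : Finset V)}

/-- The value of `f` at `x` is popular if it is shared by at least an eighth of the part of `x`. -/
def IsPopular (P : Finpartition (univ : Finset V)) (f : V → κ) (x : V) : Prop :=
  #(P.part x) ≤ 8 * #{y ∈ P.part x | f y = f x}

lemma isPopular_of_forall_eq {f : V → κ} (hf : ∀ x y, f x = f y) (x : V) : IsPopular P f x := by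
  rw [IsPopular, filter_true_of_mem fun y _ => hf y x]
  omega

lemma IsPopular.of_refines {f : V → κ} {g : V → κ'} (hgf : ∀ x y, g x = g y → f x = f y) {x : V}
    (h : IsPopular P g x) : IsPopular P f x :=
  h.trans (Nat.mul_le_mul_left 8 (card_le_card (monotone_filter_right _ fun y _ => hgf y x)))

lemma card_image_le_eight {W T : Finset V} (hW : W ∈ P.parts) (hT : T ⊆ W) {f : V → κ}
    (h : ∀ y ∈ T, IsPopular P f y) : #(T.image f) ≤ 8 := by
  have hpop : ∀ k ∈ T.image f, #W ≤ 8 * #{y ∈ W | f y = k} := by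
    intro k hk
    obtain ⟨y, hy, rfl⟩ := mem_image.1 hk
    simpa only [IsPopular, P.part_eq_of_mem hW (hT hy)] using h y hy
  have hfib : ∑ k ∈ T.image f, #{y ∈ W | f y = k} ≤ #W :=
    (sum_le_sum_of_subset (image_subset_image hT)).trans_eq (card_eq_sum_card_image f W).symm
  refine Nat.le_of_mul_le_mul_right ?_ (card_pos.2 (P.nonempty_of_mem_parts hW))
  calc #(T.image f) * #W ≤ ∑ k ∈ T.image f, 8 * #{y ∈ W | f y = k} := card_nsmul_le_sum _ _ _ hpop
    _ ≤ 8 * #W := by rw [← mul_sum]; gcongr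

lemma card_image_prodMk_le [Fintype η] {W T : Finset V} (hW : W ∈ P.parts) (hT : T ⊆ W)
    {f : V → κ} (h : ∀ y ∈ T, IsPopular P f y) (g : V → η) :
    #(T.image fun y => (f y, g y)) ≤ 8 * Fintype.card η := by
  have hsub : T.image (fun y => (f y, g y)) ⊆ T.image f ×ˢ univ :=
    image_subset_iff.2 fun y hy => mem_product.2 ⟨mem_image_of_mem f hy, mem_univ _⟩
  calc #(T.image fun y => (f y, g y)) ≤ #(T.image f ×ˢ (univ : Finset η)) := card_le_card hsub
    _ ≤ 8 * Fintype.card η := by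
      rw [card_product, card_univ]
      exact Nat.mul_le_mul_right _ (card_image_le_eight hW hT h)

lemma card_isPopular_le {f : V → κ} {m : ℕ} (hm : ∀ k, #{x | f x = k} ≤ m) :
    #{x | IsPopular P f x} ≤ #P.parts * (8 * m) := by
  have hpart : ∀ W ∈ P.parts, #{x ∈ W | IsPopular P f x} ≤ 8 * m := by
    intro W hW
    let T : Finset V := {x ∈ W | IsPopular P f x}
    calc #T = ∑ k ∈ T.image f, #{x ∈ T | f x = k} := card_eq_sum_card_image f T
      _ ≤ ∑ _k ∈ T.image f, m := sum_le_sum fun k _ =>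
          (card_le_card (filter_subset_filter _ (subset_univ T))).trans (hm k)
      _ ≤ 8 * m := by
        rw [sum_const, smul_eq_mul]
        exact Nat.mul_le_mul_right m (card_image_le_eight hW (filter_subset _ _)
          fun x hx => (mem_filter.1 hx).2)
  calc #{x | IsPopular P f x} = ∑ W ∈ P.parts, #{x ∈ W | IsPopular P f x} := by
        simp only [card_filter, sum_parts_sum]
    _ ≤ #P.parts * (8 * m) := sum_le_card_nsmul _ _ _ hpart

/-- The last `i ≤ t` such that the value of `part i` at `x` is popular. -/
noncomputable def depth (P : Finpartition (univ : Finset V)) (part : ℕ → V → κ) (t : ℕ) (x : V) :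
    ℕ :=
  Nat.findGreatest (fun i => IsPopular P (part i) x) t

variable {part : ℕ → V → κ} {t i : ℕ}

lemma isPopular_of_le_depth (hzero : ∀ x y, part 0 x = part 0 y)
    (hrefines : ∀ i x y, part (i + 1) x = part (i + 1) y → part i x = part i y) {x : V}
    (hi : i ≤ depth P part t x) : IsPopular P (part i) x := by
  have hdepth : IsPopular P (part (depth P part t x)) x :=
    Nat.findGreatest_spec (P := fun i => IsPopular P (part i) x) t.zero_le
      (isPopular_of_forall_eq hzero x)
  induction hi using Nat.decreasingInduction with
  | self => exact hdepth
  | of_succ j _ ih => exact ih.of_refines (hrefines j)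

lemma not_isPopular_of_depth_lt {x : V} (hi : depth P part t x < i) (hit : i ≤ t) :
    ¬ IsPopular P (part i) x :=
  Nat.findGreatest_is_greatest (P := fun i => IsPopular P (part i) x) hi hit

end Popular

/-! ### Counting edges by depth -/

section DoubleCounting

lemma eight_mul_sum_card_le {α β : Type*} (r : α → β → Prop) {A : Finset α} {N : Finset β} {D : ℕ}
    (hN : #N ≤ D) (h : 8 * #{a ∈ A | D < 4 * #{b ∈ N | r a b}} ≤ #A) :
    8 * ∑ b ∈ N, #{a ∈ A | r a b} ≤ 3 * D * #A := by
  have hpoint : ∀ a ∈ A, 4 * #{b ∈ N | r a b} ≤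
      D + if D < 4 * #{b ∈ N | r a b} then 4 * D else 0 := by
    intro a _
    have hle : #{b ∈ N | r a b} ≤ D := (card_filter_le _ _).trans hN
    split_ifs <;> omega
  have hsum := sum_le_sum hpoint
  rw [← mul_sum, sum_add_distrib, sum_const, smul_eq_mul, ← sum_filter, sum_const, smul_eq_mul]
    at hsum
  have hswap : ∑ a ∈ A, #{b ∈ N | r a b} = ∑ b ∈ N, #{a ∈ A | r a b} :=
    sum_card_bipartiteAbove_eq_sum_card_bipartiteBelow r
  rw [hswap] at hsum
  nlinarith

lemma sum_range_sum_filter_eq {α M : Type*} [AddCommMonoid M] (A : Finset α) (ℓ : α → ℕ) (t : ℕ)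
    (f : α → M) : ∑ i ∈ range t, ∑ x ∈ A with ℓ x = i, f x = ∑ x ∈ A with ℓ x < t, f x := by
  rw [← sum_fiberwise_of_maps_to (g := ℓ) (t := range t)
    fun x hx => mem_range.2 (mem_filter.1 hx).2]
  refine sum_congr rfl fun i hi => sum_congr ?_ fun _ _ => rfl
  rw [filter_filter]
  exact filter_congr fun x _ => by have := mem_range.1 hi; omega

/-- An edge with an endpoint at a level below `t` is counted on the right from its endpoint of lower
level. -/
lemma eCnt_lt_univ_le {V : Type*} [Fintype V] (G : SimpleGraph V) (ℓ : V → ℕ) (t : ℕ) :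
    eCnt G {x | ℓ x < t} univ ≤ 2 * ∑ i ∈ range t, eCnt G {x | ℓ x = i} {y | i ≤ ℓ y} := by
  let up : Finset (V × V) := {e | G.Adj e.1 e.2 ∧ ℓ e.1 < t ∧ ℓ e.1 ≤ ℓ e.2}
  have hcover : (({x | ℓ x < t} : Finset V) ×ˢ univ).filter (fun e => G.Adj e.1 e.2) ⊆
      up ∪ up.image Prod.swap := by
    rintro ⟨x, y⟩ he
    simp only [mem_filter, mem_product, mem_univ, true_and, and_true] at he
    rw [mem_union]
    rcases le_total (ℓ x) (ℓ y) with hxy | hyx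
    · exact Or.inl (by simp [up, he, hxy])
    · exact Or.inr (mem_image.2 ⟨(y, x), by simp [up, he.2.symm, hyx, hyx.trans_lt he.1], rfl⟩)
  have hup : #up = ∑ i ∈ range t, eCnt G {x | ℓ x = i} {y | i ≤ ℓ y} := by
    rw [card_eq_sum_card_fiberwise (f := fun e : V × V => ℓ e.1) (t := range t)
      fun e he => by simpa using (mem_filter.1 he).2.2.1]
    refine sum_congr rfl fun i hi => congrArg card ?_
    ext e
    have hit := mem_range.1 hi
    simp only [up, mem_filter, mem_product, mem_univ, true_and]
    grind
  calc eCnt G {x | ℓ x < t} univ ≤ #up + #(up.image Prod.swap) :=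
        (card_le_card hcover).trans (card_union_le _ _)
    _ ≤ 2 * ∑ i ∈ range t, eCnt G {x | ℓ x = i} {y | i ≤ ℓ y} := by
      rw [← hup, two_mul]
      exact Nat.add_le_add_left card_image_le _

end DoubleCounting

/-! ### Separating hierarchies -/

section Hierarchy

variable {V κ η : Type*} [Fintype V]

/-- The finest classes available at level `i` of a hierarchy `part`, where the label `hid` is
visible at every level. -/
def levelClass (part : ℕ → V → κ) (hid : V → η) (i : ℕ) (x : V) : κ × η :=
  (part i x, hid x)

/-- A `D`-regular graph with a hierarchy of `t` successively finer partitions, given by the fibres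
of `part i`. Vertices in different classes of level `i + 1` share few classes of level `i`, refined
by the label `hid`, among those of their neighbours. -/
structure IsSeparatingHierarchy (G : SimpleGraph V) (D t : ℕ) (part : ℕ → V → κ) (hid : V → η) :
    Prop where
  part_zero : ∀ x y, part 0 x = part 0 y
  refines : ∀ i x y, part (i + 1) x = part (i + 1) y → part i x = part i y
  card_adj : ∀ x, #{y | G.Adj x y} = D
  separates : ∀ i < t, ∀ x x', part (i + 1) x ≠ part (i + 1) x' →
    4 * #{y | G.Adj x y ∧ MeetsClass G (levelClass part hid i) x' y} ≤ D

namespace IsSeparatingHierarchy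

variable {G G' : SimpleGraph V} {D t i : ℕ} {part : ℕ → V → κ} {hid : V → η}

lemma eCnt_univ_right (h : IsSeparatingHierarchy G D t part hid) (A : Finset V) :
    eCnt G A univ = #A * D := by
  simp only [eCnt_eq_sum_left, h.card_adj, sum_const, smul_eq_mul]

lemma two_mul_ncard_edgeSet (h : IsSeparatingHierarchy G D t part hid) :
    2 * G.edgeSet.ncard = Fintype.card V * D := by
  rw [← eCnt_univ_univ, h.eCnt_univ_right, card_univ]

variable [DecidableEq V] {P : Finpartition (univ : Finset V)} {ε : ℝ} {Z : Finset V}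

/-- Most vertices of `Z` differ from `x` in `part (i + 1)`, and each of these avoids the classes of
all but a quarter of the neighbours of `x`. -/
lemma card_mul_card_adj_le (h : IsSeparatingHierarchy G D t part hid) (hi : i < t)
    (hZ : Z ∈ P.parts) {x : V} (hx : x ∈ Z) (hpop : ¬ IsPopular P (part (i + 1)) x)
    (Y : Finset V) :
    8 * (#Z * #{y ∈ Y | G.Adj x y}) ≤ 8 * ∑ y ∈ Y with G.Adj x y,
      #{x' ∈ Z | ¬ MeetsClass G (levelClass part hid i) x' y} +
        3 * D * #Z := by
  let meets (x' y : V) : Prop := MeetsClass G (levelClass part hid i) x' y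
  let N : Finset V := {y ∈ Y | G.Adj x y}
  have hN : N ⊆ ({y | G.Adj x y} : Finset V) := filter_subset_filter _ (subset_univ Y)
  have hND : #N ≤ D := (card_le_card hN).trans_eq (h.card_adj x)
  have hclose : ({x' ∈ Z | D < 4 * #{y ∈ N | meets x' y}} : Finset V) ⊆
      {x' ∈ Z | part (i + 1) x' = part (i + 1) x} := by
    refine monotone_filter_right _ fun x' _ hmany => ?_
    by_contra hne
    refine hmany.not_ge (le_trans ?_ (h.separates i hi x x' (Ne.symm hne)))
    rw [← filter_filter]
    exact Nat.mul_le_mul_left 4 (card_le_card (filter_subset_filter _ hN))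
  have hfew : 8 * #{x' ∈ Z | part (i + 1) x' = part (i + 1) x} ≤ #Z := by
    rw [IsPopular, P.part_eq_of_mem hZ hx] at hpop
    omega
  have hmeets := eight_mul_sum_card_le meets (A := Z) hND
    ((Nat.mul_le_mul_left 8 (card_le_card hclose)).trans hfew)
  have hsplit : #Z * #N = ∑ y ∈ N, #{x' ∈ Z | meets x' y} + ∑ y ∈ N, #{x' ∈ Z | ¬ meets x' y} := by
    simp only [← sum_add_distrib, card_filter_add_card_filter_not, sum_const, smul_eq_mul, mul_comm]
  change 8 * (#Z * #N) ≤ 8 * ∑ y ∈ N, #{x' ∈ Z | ¬ meets x' y} + 3 * D * #Z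
  omega

lemma card_mul_eCnt_le_sum (h : IsSeparatingHierarchy G D t part hid) (hi : i < t)
    (hZ : Z ∈ P.parts) {U : Finset V} (hU : U ⊆ Z)
    (hpop : ∀ x ∈ U, ¬ IsPopular P (part (i + 1)) x) (Y : Finset V) :
    8 * (#Z * eCnt G U Y) ≤ 8 * ∑ y ∈ Y,
      #{x ∈ Z | ¬ MeetsClass G (levelClass part hid i) x y} *
        #{x ∈ U | G.Adj x y} + 3 * D * #Z * #U := by
  let a (y : V) : ℕ :=
    #{x ∈ Z | ¬ MeetsClass G (levelClass part hid i) x y}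
  have hswap : ∑ x ∈ U, ∑ y ∈ Y with G.Adj x y, a y = ∑ y ∈ Y, a y * #{x ∈ U | G.Adj x y} := by
    simp only [sum_filter, card_filter, mul_sum, mul_ite, mul_one, mul_zero]
    exact sum_comm
  calc 8 * (#Z * eCnt G U Y) = ∑ x ∈ U, 8 * (#Z * #{y ∈ Y | G.Adj x y}) := by
        rw [eCnt_eq_sum_left, mul_sum, mul_sum]
    _ ≤ ∑ x ∈ U, (8 * ∑ y ∈ Y with G.Adj x y, a y + 3 * D * #Z) :=
        sum_le_sum fun x hx => h.card_mul_card_adj_le hi hZ (hU hx) (hpop x hx) Y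
    _ = _ := by
      rw [sum_add_distrib, ← mul_sum, hswap, sum_const, smul_eq_mul, mul_comm (#U)]

variable [Fintype η]

lemma sum_popular_le (hε : 0 ≤ ε) (i : ℕ) {U Y : Finset V} (hU : U ⊆ Z)
    (hY : ∀ y ∈ Y, IsPopular P (part i) y) :
    (∑ y ∈ Y, #{x ∈ Z | ¬ MeetsClass G (levelClass part hid i) x y} *
        #{x ∈ U | G.Adj x y} : ℝ) ≤
      #Z * eCnt (G ∆ G') U univ + #U * eCnt (G ∆ G') Z univ +
        ε * #Z * Fintype.card V * (2 * #Z + 8 * Fintype.card η * #U) +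
        (∑ W ∈ P.parts, irregular G' ε Z W * #W) * #Z * #U := by
  let F (y : V) : ℝ :=
    #{x ∈ Z | ¬ MeetsClass G (levelClass part hid i) x y} * #{x ∈ U | G.Adj x y}
  have hW : ∀ W ∈ P.parts, ∑ y ∈ W with y ∈ Y, F y ≤
      #Z * eCnt (G ∆ G') U W + #U * eCnt (G ∆ G') Z W +
        ε * #Z * (2 * #Z * #W + (8 * Fintype.card η : ℕ) * #U * #W) +
          irregular G' ε Z W * #Z * #U * #W :=
    fun W hW => sum_card_not_meetsClass_mul_le _ (card_image_prodMk_le hW (filter_subset _ _)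
      (fun y hy => hY y (mem_filter.1 hy).2) hid) hε hU (filter_subset _ _)
  calc ∑ y ∈ Y, F y = ∑ W ∈ P.parts, ∑ y ∈ W with y ∈ Y, F y := by
        simp only [sum_filter]
        rw [sum_parts_sum P fun y => if y ∈ Y then F y else 0, ← sum_filter, filter_univ_mem]
    _ ≤ _ := sum_le_sum hW
    _ = #Z * (∑ W ∈ P.parts, eCnt (G ∆ G') U W : ℕ) + #U * (∑ W ∈ P.parts, eCnt (G ∆ G') Z W : ℕ) +
        ε * #Z * (∑ W ∈ P.parts, (#W : ℝ)) * (2 * #Z + 8 * Fintype.card η * #U) +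
        (∑ W ∈ P.parts, irregular G' ε Z W * #W) * #Z * #U := by
      push_cast
      simp only [mul_sum, sum_mul, ← sum_add_distrib]
      exact sum_congr rfl fun W _ => by ring
    _ = _ := by rw [sum_parts_eCnt_right, sum_parts_eCnt_right, sum_parts_card]

/-- The bound for the vertices of one part and one depth, multiplied by the size of the part. -/
lemma card_mul_eCnt_depth_le (h : IsSeparatingHierarchy G D t part hid) (hε : 0 ≤ ε) (hi : i < t)
    (hZ : Z ∈ P.parts) {U : Finset V} (hU : U = {x ∈ Z | depth P part t x = i}) :
    (#Z * eCnt G U {y | i ≤ depth P part t y} : ℝ) ≤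
      #Z * eCnt (G ∆ G') U univ + #U * eCnt (G ∆ G') Z univ +
        ε * #Z * Fintype.card V * (2 * #Z + 8 * Fintype.card η * #U) +
        (∑ W ∈ P.parts, irregular G' ε Z W * #W) * #Z * #U + 3 / 8 * D * #Z * #U := by
  have hUZ : U ⊆ Z := hU ▸ filter_subset _ _
  have hUpop : ∀ x ∈ U, ¬ IsPopular P (part (i + 1)) x := by
    intro x hx
    rw [hU, mem_filter] at hx
    exact not_isPopular_of_depth_lt (by omega) hi
  have hYpop : ∀ y ∈ ({y | i ≤ depth P part t y} : Finset V), IsPopular P (part i) y :=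
    fun y hy => isPopular_of_le_depth h.part_zero h.refines (mem_filter.1 hy).2
  have hgain := (Nat.cast_le (α := ℝ)).2
    (h.card_mul_eCnt_le_sum hi hZ hUZ hUpop {y | i ≤ depth P part t y})
  have hpaid := sum_popular_le (G := G) (G' := G') (hid := hid) hε i hUZ hYpop
  push_cast at hgain
  linarith

lemma sum_eCnt_depth_le (h : IsSeparatingHierarchy G D t part hid) (hε : 0 ≤ ε)
    (hZ : Z ∈ P.parts) :
    (∑ i ∈ range t, eCnt G {x ∈ Z | depth P part t x = i} {y | i ≤ depth P part t y} : ℝ) ≤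
      2 * eCnt (G ∆ G') Z univ + ε * Fintype.card V * (2 * t + 8 * Fintype.card η) * #Z +
        #Z * ∑ W ∈ P.parts, irregular G' ε Z W * #W +
          3 / 8 * D * #{x ∈ Z | depth P part t x < t} := by
  let U (i : ℕ) : Finset V := {x ∈ Z | depth P part t x = i}
  let b : ℕ := #{x ∈ Z | depth P part t x < t}
  let I : ℝ := ∑ W ∈ P.parts, irregular G' ε Z W * #W
  have hI : 0 ≤ I := sum_nonneg fun W _ => mul_nonneg (irregular_nonneg ..) (Nat.cast_nonneg _)
  have hU : ∑ i ∈ range t, (#(U i) : ℝ) = b := by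
    simpa only [sum_const, smul_eq_mul, mul_one, Nat.cast_sum] using
      congrArg (Nat.cast (R := ℝ)) (sum_range_sum_filter_eq Z (depth P part t) t fun _ => 1)
  have hbZ : (b : ℝ) ≤ #Z := mod_cast card_filter_le _ _
  have hdiff : ∑ i ∈ range t, (eCnt (G ∆ G') (U i) univ : ℝ) ≤ eCnt (G ∆ G') Z univ := by
    simp only [eCnt_eq_sum_left (G ∆ G') _ univ]
    exact_mod_cast (sum_range_sum_filter_eq Z (depth P part t) t _).trans_le
      (sum_le_sum_of_subset (filter_subset _ _))
  refine le_of_mul_le_mul_left ?_ (Nat.cast_pos.2 (card_pos.2 (P.nonempty_of_mem_parts hZ)))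
  calc #Z * ∑ i ∈ range t, (eCnt G (U i) {y | i ≤ depth P part t y} : ℝ)
      ≤ ∑ i ∈ range t, (#Z * eCnt (G ∆ G') (U i) univ + #(U i) * eCnt (G ∆ G') Z univ +
          ε * #Z * Fintype.card V * (2 * #Z + 8 * Fintype.card η * #(U i)) + I * #Z * #(U i) +
            3 / 8 * D * #Z * #(U i)) := by
        rw [mul_sum]
        exact sum_le_sum fun i hi => h.card_mul_eCnt_depth_le hε (mem_range.1 hi) hZ rfl
    _ = #Z * ∑ i ∈ range t, (eCnt (G ∆ G') (U i) univ : ℝ) + b * eCnt (G ∆ G') Z univ +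
          ε * #Z * Fintype.card V * (2 * t * #Z + 8 * Fintype.card η * b) + I * #Z * b +
            3 / 8 * D * #Z * b := by
      simp only [sum_add_distrib, ← mul_sum, ← sum_mul, hU, sum_const, card_range, nsmul_eq_mul]
      ring
    _ ≤ #Z * eCnt (G ∆ G') Z univ + #Z * eCnt (G ∆ G') Z univ +
          ε * #Z * Fintype.card V * (2 * t * #Z + 8 * Fintype.card η * #Z) + I * #Z * #Z +
            3 / 8 * D * #Z * b := by gcongr
    _ = _ := by ring

lemma sum_eCnt_depth_univ_le (h : IsSeparatingHierarchy G D t part hid) (hε : 0 ≤ ε)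
    (hP : IsRegularPartitionW G' ε P) :
    (∑ i ∈ range t, eCnt G {x | depth P part t x = i} {y | i ≤ depth P part t y} : ℝ) ≤
      2 * eCnt (G ∆ G') univ univ +
        ε * (2 * t + 8 * Fintype.card η + 1) * Fintype.card V ^ 2 +
          3 / 8 * D * #{x | depth P part t x < t} := by
  have hleft (i : ℕ) : eCnt G {x | depth P part t x = i} {y | i ≤ depth P part t y} =
      ∑ Z ∈ P.parts, eCnt G {x ∈ Z | depth P part t x = i} {y | i ≤ depth P part t y} := by
    simp only [eCnt_eq_sum_left, sum_filter, sum_parts_sum]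
  have hbad : #{x | depth P part t x < t} = ∑ Z ∈ P.parts, #{x ∈ Z | depth P part t x < t} := by
    simp only [card_filter, sum_parts_sum]
  calc (∑ i ∈ range t, eCnt G {x | depth P part t x = i} {y | i ≤ depth P part t y} : ℝ)
      = ∑ Z ∈ P.parts, (∑ i ∈ range t,
          eCnt G {x ∈ Z | depth P part t x = i} {y | i ≤ depth P part t y} : ℝ) := by
        simp only [hleft, Nat.cast_sum]
        exact sum_comm
    _ ≤ _ := sum_le_sum fun Z hZ => h.sum_eCnt_depth_le (G' := G') hε hZ
    _ = 2 * eCnt (G ∆ G') univ univ +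
          ε * Fintype.card V * (2 * t + 8 * Fintype.card η) * Fintype.card V +
          ∑ Z ∈ P.parts, #Z * ∑ W ∈ P.parts, irregular G' ε Z W * #W +
          3 / 8 * D * #{x | depth P part t x < t} := by
      simp only [sum_add_distrib, ← mul_sum, hbad, ← sum_parts_eCnt_left P, Nat.cast_sum,
        ← sum_parts_card P]
    _ ≤ _ := by linarith [hP.sum_irregular_le]

/-- At least half of the edges at the vertices of depth less than `t` are charged to their endpoint
of lower depth, and `1 / 2 - 3 / 8 = 1 / 8` of their degree remains after the charging. -/
lemma mul_card_depth_lt_le (h : IsSeparatingHierarchy G D t part hid) (hε : 0 ≤ ε)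
    (hP : IsRegularPartitionW G' ε P) :
    (D * #{x | depth P part t x < t} : ℝ) ≤ 16 * eCnt (G ∆ G') univ univ +
      8 * ε * (2 * t + 8 * Fintype.card η + 1) * Fintype.card V ^ 2 := by
  have hcharge := eCnt_lt_univ_le G (depth P part t) t
  rw [h.eCnt_univ_right] at hcharge
  have hcharge' : (#{x | depth P part t x < t} * D : ℝ) ≤ 2 * ∑ i ∈ range t,
      (eCnt G {x | depth P part t x = i} {y | i ≤ depth P part t y} : ℝ) := mod_cast hcharge
  linarith [h.sum_eCnt_depth_univ_le hε hP]

theorem card_le_of_isRegularPartitionW (h : IsSeparatingHierarchy G D t part hid) (hD : 0 < D)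
    {m : ℕ} (hm : ∀ k, #{x | part t x = k} ≤ m)
    (hG' : ((G.edgeSet ∆ G'.edgeSet).ncard : ℝ) ≤ 1 / 64 * G.edgeSet.ncard) (hε : 0 ≤ ε)
    (hεD : ε * (2 * t + 8 * Fintype.card η + 1) * Fintype.card V ≤ D / 32)
    (hP : IsRegularPartitionW G' ε P) :
    Fintype.card V ≤ #P.parts * (16 * m) := by
  let bad : Finset V := {x | depth P part t x < t}
  have hbad : 2 * #bad ≤ Fintype.card V := by
    have hedges : (eCnt (G ∆ G') univ univ : ℝ) ≤ 1 / 64 * (Fintype.card V * D) := by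
      have hG : (2 * G.edgeSet.ncard : ℝ) = Fintype.card V * D := mod_cast h.two_mul_ncard_edgeSet
      rw [eCnt_univ_univ, edgeSet_symmDiff]
      push_cast
      linarith
    have hcharged : (D * (2 * #bad) : ℝ) ≤ D * Fintype.card V := by
      calc (D * (2 * #bad) : ℝ) = 2 * (D * #bad) := by ring
        _ ≤ 2 * (16 * eCnt (G ∆ G') univ univ +
            8 * (ε * (2 * t + 8 * Fintype.card η + 1) * Fintype.card V) *
              Fintype.card V) := by
          linarith [h.mul_card_depth_lt_le hε hP]
        _ ≤ 2 * (16 * (1 / 64 * (Fintype.card V * D)) + 8 * (D / 32) * Fintype.card V) := by gcongr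
        _ = D * Fintype.card V := by ring
    exact_mod_cast le_of_mul_le_mul_left hcharged (Nat.cast_pos.2 hD)
  have hpopular : ({x | ¬ depth P part t x < t} : Finset V) ⊆
      ({x | IsPopular P (part t) x} : Finset V) :=
    monotone_filter_right _ fun x _ hx => isPopular_of_le_depth h.part_zero h.refines (not_lt.1 hx)
  have hgood := (card_le_card hpopular).trans (card_isPopular_le hm)
  have hsplit : #bad + #{x | ¬ depth P part t x < t} = Fintype.card V :=
    card_filter_add_card_filter_not _
  linarith

end IsSeparatingHierarchy

end Hierarchy

/-! ### The graph -/

section Vertices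

lemma card_filter_apply_mem {ι : Type*} [Fintype ι] [DecidableEq ι] {α : ι → Type*}
    [∀ i, Fintype (α i)] (i : ι) (B : Finset (α i)) :
    #{a : ∀ j, α j | a i ∈ B} * Fintype.card (α i) = #B * Fintype.card (∀ j, α j) := by
  have hsplit : #{a : ∀ j, α j | a i ∈ B} = #(B ×ˢ (univ : Finset (∀ j : {j // j ≠ i}, α j))) :=
    card_equiv (Equiv.piSplitAt i α) (by simp [Equiv.piSplitAt])
  rw [hsplit, card_product, card_univ, Fintype.card_congr (Equiv.piSplitAt i α), Fintype.card_prod]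
  ring

/-- The coordinates `a 0, …, a t` of a vertex, with `c i` values for `a i`. -/
abbrev Coords (c : ℕ → ℕ) (t : ℕ) : Type :=
  ∀ j : Fin (t + 1), Fin (c j)

/-- The part of a vertex that is determined by any neighbour up to the words read: a mask `out` for
the word named by the vertex and a mask `inn` for the word named by the neighbour, both with one
letter per level, a tag that is common to a connected component and serves to lower the density, and
the side of the bipartition. -/
@[ext] structure Hidden (t r : ℕ) (F : Type) where
  out : Fin t → F
  inn : Fin t → F
  tag : Fin (2 ^ r)
  side : Bool

/-- The vertices of the graph. -/
@[ext] structure Vertex (c : ℕ → ℕ) (t r : ℕ) (F : Type) extends Hidden t r F where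
  coord : Coords c t

/-- The components of a hidden part as a tuple. -/
def Hidden.equivProd (t r : ℕ) (F : Type) :
    Hidden t r F ≃ (Fin t → F) × (Fin t → F) × Fin (2 ^ r) × Bool where
  toFun h := (h.out, h.inn, h.tag, h.side)
  invFun p := ⟨p.1, p.2.1, p.2.2.1, p.2.2.2⟩

/-- The components of a vertex as a pair. -/
def Vertex.equivProd (c : ℕ → ℕ) (t r : ℕ) (F : Type) :
    Vertex c t r F ≃ Coords c t × Hidden t r F where
  toFun x := (x.coord, x.toHidden)
  invFun p := ⟨p.2, p.1⟩

variable {c : ℕ → ℕ} {t r : ℕ} {F : Type}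

/-- The coordinates `a 1, …, a i`; the others are replaced by `none`, so that the type does not
depend on `i`. The coordinate `a 0` is never included. -/
def truncate (i : ℕ) (x : Vertex c t r F) (j : Fin (t + 1)) : Option (Fin (c j)) :=
  if 1 ≤ (j : ℕ) ∧ (j : ℕ) ≤ i then some (x.coord j) else none

/-- The label that a partition into few parts can afford to know: its range does not grow with the
levels, as those of `a 1, …, a t` do. -/
def label (x : Vertex c t r F) : Fin (c 0) × Hidden t r F :=
  (x.coord 0, x.toHidden)

lemma truncate_eq_iff {i : ℕ} {x y : Vertex c t r F} : truncate i x = truncate i y ↔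
    ∀ j : Fin (t + 1), 1 ≤ (j : ℕ) → (j : ℕ) ≤ i → x.coord j = y.coord j := by
  rw [funext_iff]
  refine forall_congr' fun j => ?_
  unfold truncate
  split_ifs with hj
  · simp [hj]
  · exact iff_of_true rfl fun h1 hi => absurd ⟨h1, hi⟩ hj

variable [Fintype F]

instance : Fintype (Hidden t r F) :=
  Fintype.ofEquiv _ (Hidden.equivProd t r F).symm

instance : Fintype (Vertex c t r F) :=
  Fintype.ofEquiv _ (Vertex.equivProd c t r F).symm

lemma card_hidden (hF : Fintype.card F = 2 ^ 8) :
    Fintype.card (Hidden t r F) = 2 ^ (16 * t + r + 1) := by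
  rw [Fintype.card_congr (Hidden.equivProd t r F)]
  simp only [Fintype.card_prod, Fintype.card_fun, hF, Fintype.card_fin, Fintype.card_bool]
  rw [← pow_mul]
  ring

lemma card_vertex : Fintype.card (Vertex c t r F) =
    Fintype.card (Coords c t) * Fintype.card (Hidden t r F) := by
  rw [Fintype.card_congr (Vertex.equivProd c t r F), Fintype.card_prod]

lemma card_truncate_mul_le (ht : t ≠ 0) (k : ∀ j : Fin (t + 1), Option (Fin (c j))) :
    #{x : Vertex c t r F | truncate t x = k} * c t ≤ Fintype.card (Vertex c t r F) := by
  rcases eq_empty_or_nonempty {x : Vertex c t r F | truncate t x = k} with h | ⟨x₀, hx₀⟩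
  · rw [h]; simp
  let top : Finset (Coords c t) := {a | a (Fin.last t) ∈ ({x₀.coord (Fin.last t)} : Finset _)}
  have hsub : #{x : Vertex c t r F | truncate t x = k} ≤
      #(top ×ˢ (univ : Finset (Hidden t r F))) := by
    refine card_le_card_of_injOn (Vertex.equivProd c t r F) (fun x hx => ?_)
      (Equiv.injective _).injOn
    have hx' : truncate t x = truncate t x₀ := by simp_all
    simpa [top, Vertex.equivProd] using
      truncate_eq_iff.1 hx' (Fin.last t) (Nat.one_le_iff_ne_zero.2 ht) le_rfl
  have htop : #top * c t = Fintype.card (Coords c t) := by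
    simpa only [card_singleton, one_mul, Fintype.card_fin, Fin.val_last] using
      card_filter_apply_mem (α := fun j : Fin (t + 1) => Fin (c j)) (Fin.last t)
        {x₀.coord (Fin.last t)}
  calc _ ≤ #(top ×ˢ (univ : Finset (Hidden t r F))) * c t := Nat.mul_le_mul_right _ hsub
    _ = Fintype.card (Vertex c t r F) := by
      rw [card_vertex, ← htop, card_product, card_univ]; ring

end Vertices

section Graph

variable {c : ℕ → ℕ} {t r : ℕ} {F : Type} [AddCommGroup F] {x x' y : Vertex c t r F}
  {w : ∀ i, Fin (c (i + 1)) → Fin (c i) → F}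

/-- The coordinate `a (l + 1)` of one endpoint of an edge names a word, the coordinate `a l` of the
other a position in it, and the masks of the two endpoints add up to the letter there. -/
structure Linked (w : ∀ i, Fin (c (i + 1)) → Fin (c i) → F) (x y : Vertex c t r F) : Prop where
  out_add_inn : ∀ l : Fin t, x.out l + y.inn l = w l (x.coord l.succ) (y.coord l.castSucc)
  inn_add_out : ∀ l : Fin t, x.inn l + y.out l = w l (y.coord l.succ) (x.coord l.castSucc)
  tag_eq : x.tag = y.tag
  side_eq_not : y.side = !x.side

lemma Linked.symm (h : Linked w x y) : Linked w y x where
  out_add_inn l := (add_comm _ _).trans (h.inn_add_out l)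
  inn_add_out l := (add_comm _ _).trans (h.out_add_inn l)
  tag_eq := h.tag_eq.symm
  side_eq_not := by rw [h.side_eq_not, Bool.not_not]

/-- The bipartite graph of linked vertices. -/
def linkGraph (w : ∀ i, Fin (c (i + 1)) → Fin (c i) → F) : SimpleGraph (Vertex c t r F) where
  Adj := Linked w
  symm := ⟨fun _ _ => Linked.symm⟩
  loopless := ⟨fun _ h => by simpa using h.side_eq_not⟩

/-- The neighbour of `x` with coordinates `a`. -/
def neighbor (w : ∀ i, Fin (c (i + 1)) → Fin (c i) → F) (x : Vertex c t r F) (a : Coords c t) :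
    Vertex c t r F where
  coord := a
  out l := w l (a l.succ) (x.coord l.castSucc) - x.inn l
  inn l := w l (x.coord l.succ) (a l.castSucc) - x.out l
  tag := x.tag
  side := !x.side

lemma linkGraph_adj_neighbor (a : Coords c t) : (linkGraph w).Adj x (neighbor w x a) where
  out_add_inn _ := add_sub_cancel ..
  inn_add_out _ := add_sub_cancel ..
  tag_eq := rfl
  side_eq_not := rfl

lemma neighbor_coord_of_adj (h : (linkGraph w).Adj x y) : neighbor w x y.coord = y := by
  ext l
  · exact sub_eq_of_eq_add' (h.inn_add_out l).symm
  · exact sub_eq_of_eq_add' (h.out_add_inn l).symm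
  · exact congrArg Fin.val h.tag_eq
  · exact h.side_eq_not.symm
  · rfl

lemma linkGraph_colorable :
    (linkGraph w : SimpleGraph (Vertex c t r F)).Colorable 2 := by
  refine (SimpleGraph.Coloring.mk (α := Bool) (fun x => x.side) fun {x y} hxy => ?_).colorable
  rw [(hxy : Linked w x y).side_eq_not]
  simp

/-- A vertex in the class of `y` has the same mask `inn` and the same `a l` as `y`, so the letters
read on the edges from `x` to `y` and from `x'` to that vertex differ as the masks `out` do. -/
lemma sub_eq_sub_of_meetsClass_neighbor {i : ℕ} {l : Fin t} (hl : (l : ℕ) ≤ i) {a : Coords c t}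
    (h : MeetsClass (linkGraph w) (levelClass truncate label i) x' (neighbor w x a)) :
    w l (x.coord l.succ) (a l.castSucc) - w l (x'.coord l.succ) (a l.castSucc) =
      x.out l - x'.out l := by
  obtain ⟨y', hclass, hadj⟩ := h
  obtain ⟨htrunc, hlabel⟩ := Prod.mk.inj hclass
  obtain ⟨hzero, hhidden⟩ := Prod.mk.inj hlabel
  have hcoord : y'.coord l.castSucc = a l.castSucc := by
    rcases Nat.eq_zero_or_pos (l : ℕ) with h0 | hpos
    · rwa [show l.castSucc = 0 from Fin.ext h0]
    · exact truncate_eq_iff.1 htrunc l.castSucc hpos hl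
  have hx' := hadj.out_add_inn l
  have hx : x.out l + (neighbor w x a).inn l = w l (x.coord l.succ) (a l.castSucc) :=
    (linkGraph_adj_neighbor a).out_add_inn l
  rw [hcoord, hhidden] at hx'
  rw [← hx', ← hx, add_sub_add_right_eq_sub]

variable [Fintype F]

lemma card_linkGraph_adj_and (Q : Vertex c t r F → Prop) :
    #{y | (linkGraph w).Adj x y ∧ Q y} = #{a | Q (neighbor w x a)} := by
  refine card_nbij' (fun y => y.coord) (neighbor w x) ?_ ?_ ?_ ?_
  · intro y hy
    simp_all [neighbor_coord_of_adj]
  · intro a ha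
    simp_all [linkGraph_adj_neighbor]
  · intro y hy
    exact neighbor_coord_of_adj (by simp_all)
  · exact fun _ _ => rfl

lemma four_mul_card_meetsClass_le (hw : ∀ i, Pairwise fun a b => ¬ IsClose (w i a) (w i b)) {i : ℕ}
    (hne : truncate (i + 1) x ≠ truncate (i + 1) x') :
    4 * #{y | (linkGraph w).Adj x y ∧
        MeetsClass (linkGraph w) (levelClass truncate label i) x' y} ≤
      Fintype.card (Coords c t) := by
  obtain ⟨j, hj1, hji, hj⟩ : ∃ j : Fin (t + 1), 1 ≤ (j : ℕ) ∧ (j : ℕ) ≤ i + 1 ∧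
      x.coord j ≠ x'.coord j := by simpa [truncate_eq_iff] using hne
  obtain ⟨l, rfl⟩ := Fin.exists_succ_eq.2 (show j ≠ 0 by rintro rfl; simp at hj1)
  let B : Finset (Fin (c l)) :=
    {u | w l (x.coord l.succ) u - w l (x'.coord l.succ) u = x.out l - x'.out l}
  have hB : 4 * #B ≤ c l := by
    simpa [IsClose, B] using fun h => hw l hj.symm ⟨_, h⟩
  have hmem (a : Coords c t)
      (ha : MeetsClass (linkGraph w) (levelClass truncate label i) x' (neighbor w x a)) :
      a l.castSucc ∈ B :=
    (mem_filter_univ _).2 (sub_eq_sub_of_meetsClass_neighbor (Nat.le_of_succ_le_succ hji) ha)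
  have hcount : #{a : Coords c t | a l.castSucc ∈ B} * c l = #B * Fintype.card (Coords c t) := by
    simpa only [Fintype.card_fin, Fin.val_castSucc] using
      card_filter_apply_mem (α := fun j : Fin (t + 1) => Fin (c j)) l.castSucc B
  rw [card_linkGraph_adj_and]
  refine Nat.le_of_mul_le_mul_right ?_ (x.coord l.castSucc).pos
  calc 4 * #{a | MeetsClass (linkGraph w) (levelClass truncate label i) x' (neighbor w x a)} * c l
      ≤ 4 * (#{a : Coords c t | a l.castSucc ∈ B} * c l) := by
        rw [mul_assoc]; gcongr with a; exact hmem a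
    _ = 4 * #B * Fintype.card (Coords c t) := by rw [hcount, mul_assoc]
    _ ≤ Fintype.card (Coords c t) * c l := by rw [mul_comm _ (c l)]; gcongr

lemma isSeparatingHierarchy_linkGraph (hw : ∀ i, Pairwise fun a b => ¬ IsClose (w i a) (w i b)) :
    IsSeparatingHierarchy (linkGraph w : SimpleGraph (Vertex c t r F))
      (Fintype.card (Coords c t)) t truncate label where
  part_zero x y := truncate_eq_iff.2 fun j h1 h0 => by omega
  refines i x y h := truncate_eq_iff.2 fun j h1 hi => truncate_eq_iff.1 h j h1 (by omega)
  card_adj x := by simpa using card_linkGraph_adj_and (w := w) (x := x) fun _ => True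
  separates i _ x x' := four_mul_card_meetsClass_le hw

end Graph

section Transport

variable {V V' κ η : Type*}

lemma meetsClass_comap_iff {G : SimpleGraph V} (e : V' ≃ V) {q : V → κ} {x y : V'} :
    MeetsClass (G.comap e) (q ∘ e) x y ↔ MeetsClass G q (e x) (e y) :=
  e.exists_congr_left.trans (by simp [MeetsClass])

variable [Fintype V] [Fintype V']

lemma IsSeparatingHierarchy.comap {G : SimpleGraph V} {D t : ℕ} {part : ℕ → V → κ} {hid : V → η}
    (h : IsSeparatingHierarchy G D t part hid) (e : V' ≃ V) :
    IsSeparatingHierarchy (G.comap e) D t (fun i => part i ∘ e) (hid ∘ e) where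
  part_zero _ _ := h.part_zero _ _
  refines i _ _ := h.refines i _ _
  card_adj x := (card_equiv e (by simp)).trans (h.card_adj (e x))
  separates i hi x x' hne := by
    refine le_of_eq_of_le (congrArg (4 * ·) (card_equiv e fun y => ?_)) (h.separates i hi _ _ hne)
    simp only [mem_filter_univ, SimpleGraph.comap_adj]
    exact and_congr_right fun _ => meetsClass_comap_iff e (q := levelClass part hid i)

end Transport

/-! ### The lower bound -/

section LowerBound

variable {V κ η : Type*} [Fintype V] {G G' : SimpleGraph V} {D t : ℕ} {part : ℕ → V → κ}
  {hid : V → η}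

lemma IsSeparatingHierarchy.graphDensity_eq (h : IsSeparatingHierarchy G D t part hid) :
    graphDensity G = D / Fintype.card V := by
  have hedges : (2 * G.edgeSet.ncard : ℝ) = Fintype.card V * D := mod_cast h.two_mul_ncard_edgeSet
  rw [graphDensity, hedges, sq]
  rcases eq_or_ne (Fintype.card V : ℝ) 0 with h0 | h0
  · simp [h0]
  · exact mul_div_mul_left _ _ h0

lemma IsSeparatingHierarchy.twr_le_card_parts [DecidableEq V] [Fintype η] {s : ℕ}
    (h : IsSeparatingHierarchy G D t part hid) (hD : 0 < D) (hV : Fintype.card V = D * 2 ^ s)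
    (hη : Fintype.card η = 16 * 2 ^ s) (hts : t ≤ s)
    (hpart : t ≠ 0 → ∀ k, #{x | part t x = k} * codeSize t ≤ Fintype.card V)
    (hG' : ((G.edgeSet ∆ G'.edgeSet).ncard : ℝ) ≤ 1 / 64 * G.edgeSet.ncard)
    {P : Finpartition (univ : Finset V)}
    (hP : IsRegularPartitionW G' ((1 / 2 ^ s) ^ 2 / 2 ^ 13) P) : twr t ≤ #P.parts := by
  have hVpos : 0 < Fintype.card V := by rw [hV]; positivity
  rcases eq_or_ne t 0 with rfl | ht
  · have : Nonempty V := Fintype.card_pos_iff.1 hVpos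
    exact card_pos.2 (P.parts_nonempty univ_nonempty.ne_empty)
  have hcodePos : 0 < codeSize t := by linarith [twr_add_twelve_le_codeSize t]
  have hfiber (k : κ) : #{x | part t x = k} ≤ Fintype.card V / codeSize t :=
    (Nat.le_div_iff_mul_le hcodePos).2 (hpart ht k)
  have hεD : ((1 / 2 ^ s) ^ 2 / 2 ^ 13 * (2 * t + 8 * Fintype.card η + 1) * Fintype.card V : ℝ) ≤
      D / 32 := by
    have ht2 : (t : ℝ) + 1 ≤ 2 ^ s := mod_cast (Nat.lt_two_pow_self (n := s)).trans_le' (by omega)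
    have herr : (1 / 2 ^ s : ℝ) ^ 2 / 2 ^ 13 * (2 * t + 8 * (16 * 2 ^ s) + 1) * 2 ^ s ≤ 1 / 32 := by
      rw [div_pow, one_pow, div_div, one_div_mul_eq_div, div_mul_eq_mul_div,
        div_le_iff₀ (by positivity)]
      nlinarith [pow_pos (two_pos (α := ℝ)) s]
    rw [hη, hV]
    push_cast
    linarith [mul_le_mul_of_nonneg_left herr D.cast_nonneg (α := ℝ)]
  have hparts := h.card_le_of_isRegularPartitionW hD hfiber hG' (by positivity) hεD hP
  have hcode : codeSize t ≤ 16 * #P.parts := by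
    refine Nat.le_of_mul_le_mul_left ?_ hVpos
    calc Fintype.card V * codeSize t
        ≤ #P.parts * (16 * (Fintype.card V / codeSize t)) * codeSize t := by gcongr
      _ = 16 * #P.parts * (Fintype.card V / codeSize t * codeSize t) := by ring
      _ ≤ 16 * #P.parts * Fintype.card V := by gcongr; exact Nat.div_mul_le_self ..
      _ = Fintype.card V * (16 * #P.parts) := mul_comm ..
  linarith [sixteen_mul_twr_le_codeSize ht]

lemma exists_separated_words : ∃ w : ∀ i, Fin (codeSize (i + 1)) → Fin (codeSize i) →
    (Fin 8 → ZMod 2), ∀ i, Pairwise fun a b => ¬ IsClose (w i a) (w i b) := by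
  have hF : Fintype.card (Fin 8 → ZMod 2) = 2 ^ 8 := by simp
  have hcode (i : ℕ) : ∃ w : Fin (codeSize (i + 1)) → Fin (codeSize i) → (Fin 8 → ZMod 2),
      Pairwise fun a b => ¬ IsClose (w a) (w b) := by
    have hpos : 8 ≤ Fintype.card (Fin (codeSize i)) := by
      rw [Fintype.card_fin]; linarith [twr_add_twelve_le_codeSize i]
    have h := exists_code hF hpos
    rwa [Fintype.card_fin] at h
  exact Classical.skolem.1 hcode

lemma floor_mul_logb_two_pow (s k : ℕ) :
    ⌊1 / k * Real.logb 2 (1 / (1 / 2 ^ s))⌋₊ = s / k := by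
  rw [one_div_one_div, Real.logb_pow, Real.logb_self_eq_one one_lt_two, mul_one,
    one_div_mul_eq_div, Nat.floor_div_eq_div]

theorem sral_lower_bound_general :
    ∃ δ₀ c : ℝ, 0 < δ₀ ∧ 0 < c ∧
      ∀ s : ℕ, 1 ≤ s →
      ∀ p : ℝ, p = 1 / 2 ^ s →
      ∃ (n : ℕ) (G : SimpleGraph (Fin n)),
        G.Colorable 2 ∧ graphDensity G = p ∧
        ∀ G' : SimpleGraph (Fin n),
          ((G.edgeSet ∆ G'.edgeSet).ncard : ℝ) ≤ δ₀ * G.edgeSet.ncard →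
          ∀ Z : Finpartition (univ : Finset (Fin n)),
            IsRegularPartitionW G' (p ^ 2 / 2 ^ 13) Z →
            twr ⌊c * Real.logb 2 (1 / p)⌋₊ ≤ Z.parts.card := by
  refine ⟨1 / 64, 1 / (32 : ℕ), by norm_num, by norm_num, ?_⟩
  rintro s hs _ rfl
  rw [floor_mul_logb_two_pow]
  obtain ⟨r, hr⟩ : ∃ r, 16 * (s / 32) + r + 1 = s := ⟨s - 1 - 16 * (s / 32), by omega⟩
  obtain ⟨w, hw⟩ := exists_separated_words
  let V := Vertex codeSize (s / 32) r (Fin 8 → ZMod 2)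
  let D := Fintype.card (Coords codeSize (s / 32))
  let e : Fin (Fintype.card V) ≃ V := (Fintype.equivFin V).symm
  have hhidden : Fintype.card (Hidden (s / 32) r (Fin 8 → ZMod 2)) = 2 ^ s := by
    rw [card_hidden (by simp), hr]
  have hV : Fintype.card (Fin (Fintype.card V)) = D * 2 ^ s := by
    rw [Fintype.card_fin, card_vertex, hhidden]
  have hD : 0 < D := Fintype.card_pos_iff.2
    ⟨fun j => ⟨0, by linarith [twr_add_twelve_le_codeSize j]⟩⟩
  have h := (isSeparatingHierarchy_linkGraph (t := s / 32) (r := r) hw).comap e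
  refine ⟨_, (linkGraph w).comap e, .of_hom ⟨e, id⟩ linkGraph_colorable, ?_, fun G' hG' Z hZ => ?_⟩
  · rw [h.graphDensity_eq, hV, Nat.cast_mul, div_mul_cancel_left₀ (by positivity)]
    simp
  · refine h.twr_le_card_parts hD hV ?_ (Nat.div_le_self ..) (fun ht k => ?_) hG' hZ
    · rw [Fintype.card_prod, Fintype.card_fin, hhidden, codeSize]
    · rw [card_equiv e (t := {x | truncate (s / 32) x = k}) (by simp), Fintype.card_fin]
      exact card_truncate_mul_le ht k

end LowerBound

/-- **Lower bound for the sparse regular approximation lemma (SRAL).**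
There are absolute constants `δ₀, c > 0` such that for every even `s ≥ 400`, with `p = 2^{-s}`,
there is a bipartite graph `G` of density `p` such that: for every graph `G'` obtained from `G`
by adding/removing at most `δ₀|E(G)|` edges and every `p⁵`-regular (not necessarily equitable)
partition `Z` of its vertex set, the order of `Z` is at least `twr(c·log₂(1/p))`. -/
theorem sral_lower_bound :
    ∃ δ₀ c : ℝ, 0 < δ₀ ∧ 0 < c ∧
      ∀ s : ℕ, Even s → 400 ≤ s →
      ∀ p : ℝ, p = 1 / 2 ^ s →
      ∃ (n : ℕ) (G : SimpleGraph (Fin n)),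
        G.Colorable 2 ∧ graphDensity G = p ∧
        ∀ G' : SimpleGraph (Fin n),
          ((symmDiff G.edgeSet G'.edgeSet).ncard : ℝ) ≤ δ₀ * G.edgeSet.ncard →
          ∀ Z : Finpartition (univ : Finset (Fin n)),
            IsRegularPartitionW G' (p ^ 5) Z →
            twr ⌊c * Real.logb 2 (1 / p)⌋₊ ≤ Z.parts.card := by
  obtain ⟨δ₀, c, hδ₀, hc, h⟩ := sral_lower_bound_general
  refine ⟨δ₀, c, hδ₀, hc, fun s _ hs p hp => ?_⟩
  obtain ⟨n, G, hcol, hdens, hG⟩ := h s (by omega) p hp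
  have hpow : p ^ 5 ≤ p ^ 2 / 2 ^ 13 := by
    have hp3 : p ^ 3 ≤ 1 / 2 ^ 13 := by
      rw [hp, one_div_pow, ← pow_mul]
      exact one_div_le_one_div_of_le (by positivity) (pow_le_pow_right₀ one_le_two (by omega))
    calc p ^ 5 = p ^ 2 * p ^ 3 := pow_add p 2 3
      _ ≤ p ^ 2 * (1 / 2 ^ 13) := by gcongr
      _ = p ^ 2 / 2 ^ 13 := mul_one_div ..
  exact ⟨n, G, hcol, hdens, fun G' hG' Z hZ => hG G' hG' Z (hZ.mono hpow)⟩
end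

section
/- For every graph H on h vertices there is a constant C = C(H) such that for every ε ∈ (0,1) and every n-vertex graph G the following holds: if G cannot be made H-free by deleting fewer than εn² edges, then G contains at least n^h / twr(C·⌈log₂(1/ε)⌉) copies of H (i.e., at least that many injective maps V(H) → V(G) that map edges of H to edges of G). -/
/-!
Every graph `G` has a core: a subgraph `G₀` meeting all copies of `H` and such that destroying all
copies in `G₀` costs a constant proportion of its edges. If `G` is far from being `H`-free then `G₀`
has density `d ≥ ε`. Given a partition `P` of the vertices into at most `T` cells, weak regularity
provides a refinement `Q` with at most `2^(T^O(1))` cells for which replacing the adjacency matrix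
by its averages over the blocks of `Q` hardly changes the density of homomorphisms from `H`. If this
density is very small, the edges of `G₀` lying in blocks of `P` on most of which the average does
not drop substantially when passing to `Q` contain no copy of `H`. As `G₀` is a core, a constant
proportion of its edges lies outside, and since `t ↦ t log t` is convex this makes the mean entropy
`t log t` of the block densities increase by a constant times `d`. The entropy is at least
`d log d` and at most `0`, so there are only `O(log (1 / d))` such steps, each of which increases
the number of cells by a bounded number of exponentials.
-/

open Finset
open scoped Classical

/-- The number of copies of `H` in `G`, i.e. of injective maps `V(H) → V(G)` that map
edges of `H` to edges of `G`. -/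
noncomputable def copyCount {α β : Type*} (H : SimpleGraph α) (G : SimpleGraph β) : ℕ :=
  Nat.card {f : α → β // Function.Injective f ∧ ∀ ⦃a b : α⦄, H.Adj a b → G.Adj (f a) (f b)}

open InformationTheory
open scoped BigOperators

/-! ### Averaging over the cells of a partition -/

lemma indicator_one_mem_unitInterval {ι : Type*} (S : Set ι) (z : ι) :
    (S.indicator 1 z : ℝ) ∈ unitInterval := by
  by_cases hz : z ∈ S <;> simp [hz]

lemma expect_mem_unitInterval {ι : Type*} {s : Finset ι} {f : ι → ℝ}
    (hf : ∀ z ∈ s, f z ∈ unitInterval) :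
    𝔼 z ∈ s, f z ∈ unitInterval := by
  rcases s.eq_empty_or_nonempty with rfl | hs
  · simp
  · exact ⟨expect_nonneg fun z hz => (hf z hz).1, expect_le hs fun z hz => (hf z hz).2⟩

section CellAverage

variable {X : Type*} [Fintype X] {P Q : Setoid X} {f u : X → ℝ}

/-- The part containing `z` of the partition of `X` encoded by the setoid `P`. -/
noncomputable def cell (P : Setoid X) (z : X) : Finset X := {w | P z w}

@[simp]
lemma mem_cell {z w : X} : w ∈ cell P z ↔ P z w := by simp [cell]

lemma self_mem_cell (P : Setoid X) (z : X) : z ∈ cell P z := mem_cell.2 (P.refl z)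

lemma cell_nonempty (P : Setoid X) (z : X) : (cell P z).Nonempty := ⟨z, self_mem_cell P z⟩

lemma cell_congr {z w : X} (h : P z w) : cell P z = cell P w := by
  ext x
  simpa only [mem_cell] using ⟨P.trans (P.symm h), P.trans h⟩

/-- The conditional expectation of `f` given the partition `P`, for the uniform distribution
on `X`. -/
noncomputable def cellAverage (P : Setoid X) (f : X → ℝ) (z : X) : ℝ := 𝔼 w ∈ cell P z, f w

lemma cellAverage_congr (f : X → ℝ) {z w : X} (h : P z w) :
    cellAverage P f z = cellAverage P f w := by
  rw [cellAverage, cellAverage, cell_congr h]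

lemma cellAverage_top (f : X → ℝ) (z : X) : cellAverage ⊤ f z = 𝔼 w, f w := by
  rw [cellAverage, show cell ⊤ z = univ by ext w; simp [Setoid.top_def]]

lemma cellAverage_nonneg (hf : ∀ z, 0 ≤ f z) (z : X) : 0 ≤ cellAverage P f z :=
  expect_nonneg fun w _ => hf w

lemma cellAverage_mem_unitInterval (hf : ∀ z, f z ∈ unitInterval) (z : X) :
    cellAverage P f z ∈ unitInterval :=
  expect_mem_unitInterval fun w _ => hf w

lemma cellAverage_eq_zero_of_le (hQP : Q ≤ P) (hf : ∀ z, 0 ≤ f z) {z : X}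
    (hz : cellAverage P f z = 0) : cellAverage Q f z = 0 :=
  expect_eq_zero fun w hw => (Finset.expect_eq_zero_iff_of_nonneg fun w _ => hf w).1 hz w
    (mem_cell.2 (hQP (mem_cell.1 hw)))

lemma expect_cellAverage (P : Setoid X) (f : X → ℝ) : 𝔼 z, cellAverage P f z = 𝔼 z, f z := by
  have sum_weights (w : X) : ∑ z, (if P z w then f w / #(cell P z) else 0) = f w := by
    have hcard : (#(cell P w) : ℝ) ≠ 0 := by simpa using (cell_nonempty P w).ne_empty
    calc ∑ z, (if P z w then f w / #(cell P z) else 0)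
        = ∑ z, (if P w z then f w / #(cell P w) else 0) := by
          refine sum_congr rfl fun _ _ => ?_
          rw [P.comm']
          split_ifs with h
          exacts [by rw [cell_congr h], rfl]
      _ = ∑ _ ∈ cell P w, f w / #(cell P w) := by rw [← sum_filter, cell]
      _ = f w := by rw [sum_const, nsmul_eq_mul, mul_div_cancel₀ _ hcard]
  have cellAverage_eq (z : X) :
      cellAverage P f z = ∑ w, if P z w then f w / #(cell P z) else 0 := by
    rw [cellAverage, expect_eq_sum_div_card, sum_div, ← sum_filter, cell]
  simp only [expect_eq_sum_div_card, cellAverage_eq]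
  rw [sum_comm]
  simp only [sum_weights]

lemma cellAverage_mul (hu : ∀ ⦃z w⦄, P z w → u z = u w) (f : X → ℝ) (z : X) :
    cellAverage P (fun w => u w * f w) z = u z * cellAverage P f z := by
  rw [cellAverage, cellAverage, mul_expect]
  exact expect_congr rfl fun w hw => by rw [hu (mem_cell.1 hw)]

lemma expect_mul_cellAverage (hu : ∀ ⦃z w⦄, P z w → u z = u w) (f : X → ℝ) :
    𝔼 z, u z * cellAverage P f z = 𝔼 z, u z * f z := by
  simp_rw [← cellAverage_mul hu, expect_cellAverage]

lemma expect_mul_cellAverage_of_le (hQP : Q ≤ P) (hu : ∀ ⦃z w⦄, P z w → u z = u w) (f : X → ℝ) :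
    𝔼 z, u z * cellAverage Q f z = 𝔼 z, u z * cellAverage P f z := by
  rw [expect_mul_cellAverage fun z w h => hu (hQP h), expect_mul_cellAverage hu]

lemma expect_mul_cellAverage_comm (P : Setoid X) (f g : X → ℝ) :
    𝔼 z, f z * cellAverage P g z = 𝔼 z, cellAverage P f z * g z := by
  rw [← expect_mul_cellAverage fun _ _ => cellAverage_congr f]
  simpa only [mul_comm] using (expect_mul_cellAverage (fun _ _ => cellAverage_congr g) f).symm

lemma expect_mul_indicator_cellAverage_lt_le (P : Setoid X) (f : X → ℝ) {c : ℝ} (hc : 0 ≤ c) :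
    𝔼 z, f z * {z | cellAverage P f z < c}.indicator 1 z ≤ c := by
  have hcongr ⦃z w : X⦄ (h : P z w) : ({z | cellAverage P f z < c}.indicator 1 z : ℝ) =
      {z | cellAverage P f z < c}.indicator 1 w := by
    simp only [Set.indicator_apply, Set.mem_ofPred_eq, cellAverage_congr f h, Pi.one_apply]
  simp only [mul_comm (f _)]
  rw [← expect_mul_cellAverage hcongr]
  rcases isEmpty_or_nonempty X with _ | _
  · simpa using hc
  · refine expect_le univ_nonempty fun z _ => ?_
    by_cases hz : cellAverage P f z < c
    · simpa [hz] using hz.le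
    · simpa [hz] using hc

/-- The mean square density of `f` over the partition `P`. -/
noncomputable def energy (P : Setoid X) (f : X → ℝ) : ℝ := 𝔼 z, cellAverage P f z ^ 2

lemma energy_eq_add_of_le (hQP : Q ≤ P) (f : X → ℝ) :
    energy Q f = energy P f + 𝔼 z, (cellAverage Q f z - cellAverage P f z) ^ 2 := by
  have cross : 𝔼 z, cellAverage P f z * cellAverage Q f z = 𝔼 z, cellAverage P f z ^ 2 := by
    simpa only [sq] using expect_mul_cellAverage_of_le hQP (fun z w h => cellAverage_congr f h) f
  have expand (z : X) : (cellAverage Q f z - cellAverage P f z) ^ 2 = cellAverage Q f z ^ 2 -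
      2 * (cellAverage P f z * cellAverage Q f z) + cellAverage P f z ^ 2 := by ring
  simp only [energy, expand, expect_add_distrib, expect_sub_distrib, ← mul_expect, cross]
  ring

lemma energy_nonneg (P : Setoid X) (f : X → ℝ) : 0 ≤ energy P f :=
  expect_nonneg fun _ _ => sq_nonneg _

lemma energy_le_one (hf : ∀ z, f z ∈ unitInterval) : energy P f ≤ 1 := by
  refine (expect_mem_unitInterval fun z _ => ?_).2
  have h := cellAverage_mem_unitInterval (P := P) hf z
  exact ⟨sq_nonneg _, pow_le_one₀ h.1 h.2⟩

/-- The mean of `x log x` over the cell densities of `f`, the negative of an entropy. -/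
noncomputable def entropy (P : Setoid X) (f : X → ℝ) : ℝ :=
  𝔼 z, cellAverage P f z * Real.log (cellAverage P f z)

lemma entropy_top [Nonempty X] (f : X → ℝ) :
    entropy ⊤ f = (𝔼 z, f z) * Real.log (𝔼 z, f z) := by
  simp only [entropy, cellAverage_top, Fintype.expect_const]

lemma entropy_nonpos (hf : ∀ z, f z ∈ unitInterval) : entropy P f ≤ 0 := by
  rw [← neg_nonneg, entropy, ← expect_neg_distrib]
  exact expect_nonneg fun z _ => neg_nonneg.2 <| Real.mul_log_nonpos
    (cellAverage_mem_unitInterval hf z).1 (cellAverage_mem_unitInterval hf z).2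

lemma mul_klFun_div {x y : ℝ} (hy : y = 0 → x = 0) :
    y * klFun (x / y) = x * Real.log x - Real.log y * x + y - x := by
  rcases eq_or_ne y 0 with rfl | hy0
  · simp [hy rfl]
  rcases eq_or_ne x 0 with rfl | hx0
  · simp [klFun_apply]
  rw [klFun_apply, Real.log_div hx0 hy0]
  field_simp

lemma entropy_eq_add_of_le (hQP : Q ≤ P) (hf : ∀ z, 0 ≤ f z) :
    entropy Q f = entropy P f +
      𝔼 z, cellAverage P f z * klFun (cellAverage Q f z / cellAverage P f z) := by
  have cross : 𝔼 z, Real.log (cellAverage P f z) * cellAverage Q f z = entropy P f := by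
    rw [expect_mul_cellAverage_of_le hQP
      (fun z w h => congrArg Real.log (cellAverage_congr f h)), entropy]
    simp only [mul_comm]
  simp only [mul_klFun_div (cellAverage_eq_zero_of_le hQP hf), expect_add_distrib,
    expect_sub_distrib, cross, expect_cellAverage]
  rw [entropy]
  ring

lemma quarter_le_klFun {t : ℝ} (h0 : 0 ≤ t) (ht : t ≤ 1 / 4) : 1 / 4 ≤ klFun t := by
  -- the tangent of the convex function `x log x` at `1 / 4`
  have tangent : t * Real.log (1 / 4) + t - 1 / 4 ≤ t * Real.log t := by
    rcases h0.eq_or_lt with rfl | h0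
    · norm_num
    have h := Real.log_le_sub_one_of_pos (show 0 < 1 / 4 / t by positivity)
    rw [Real.log_div (by norm_num) h0.ne'] at h
    have := mul_le_mul_of_nonneg_left h h0.le
    have : t * (1 / 4 / t - 1) = 1 / 4 - t := by field_simp
    linarith
  have hlog : -(3 / 2) ≤ Real.log (1 / 4) := by
    rw [one_div, Real.log_inv, show (4 : ℝ) = 2 ^ 2 by norm_num, Real.log_pow]
    linarith [Real.log_two_lt_d9]
  rw [klFun_apply]
  nlinarith

lemma sum_inv_card_cell (P : Setoid X) : ∑ z, (#(cell P z) : ℝ)⁻¹ = Nat.card (Quotient P) := by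
  have hfiber (q : Quotient P) : ∑ z with Quotient.mk P z = q, (#(cell P z) : ℝ)⁻¹ = 1 := by
    obtain ⟨w, rfl⟩ := q.exists_rep
    have hcell : ({z | Quotient.mk P z = Quotient.mk P w} : Finset X) = cell P w := by
      ext z
      rw [mem_filter_univ, Quotient.eq, mem_cell, Setoid.comm']
    rw [hcell, sum_congr rfl fun z hz => by rw [← cell_congr (mem_cell.1 hz)], sum_const,
      nsmul_eq_mul, mul_inv_cancel₀ (by simp [(cell_nonempty P w).ne_empty])]
  rw [← sum_fiberwise univ (Quotient.mk P), sum_congr rfl fun q _ => hfiber q, sum_const,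
    card_univ, nsmul_one, Nat.card_eq_fintype_card]

lemma expect_indicator_card_cell_lt_le (P : Setoid X) {κ : ℝ} (hκ : 0 ≤ κ) :
    𝔼 z, {z | #(cell P z) < κ * Fintype.card X}.indicator 1 z ≤ Nat.card (Quotient P) * κ := by
  have hle (z : X) : ({z | #(cell P z) < κ * Fintype.card X}.indicator 1 z : ℝ) ≤
      (#(cell P z) : ℝ)⁻¹ * (κ * Fintype.card X) := by
    have hpos : (0 : ℝ) < #(cell P z) := by exact_mod_cast card_pos.2 (cell_nonempty P z)
    by_cases hz : #(cell P z) < κ * Fintype.card X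
    · rw [Set.indicator_of_mem (by exact hz), Pi.one_apply, inv_mul_eq_div, one_le_div hpos]
      exact hz.le
    · rw [Set.indicator_of_notMem (by exact hz)]
      positivity
  calc _ ≤ 𝔼 z, (#(cell P z) : ℝ)⁻¹ * (κ * Fintype.card X) := expect_le_expect fun z _ => hle z
    _ = Nat.card (Quotient P) * (κ * Fintype.card X) / Fintype.card X := by
        rw [← expect_mul, expect_eq_sum_div_card, sum_inv_card_cell, card_univ, div_mul_eq_mul_div]
    _ ≤ Nat.card (Quotient P) * κ := by
        rw [← mul_assoc]
        exact div_le_of_le_mul₀ (by positivity) (by positivity) le_rfl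

/-- The indicator of the points at which refining `P` to `Q` cuts the cell average of `f` to a
quarter or less. -/
noncomputable def dropIndicator (P Q : Setoid X) (f : X → ℝ) : X → ℝ :=
  {z | cellAverage Q f z ≤ cellAverage P f z / 4}.indicator 1

lemma entropy_add_le_of_le (hQP : Q ≤ P) (hf : ∀ z, 0 ≤ f z) :
    entropy P f + (𝔼 z, cellAverage P f z * dropIndicator P Q f z) / 4 ≤ entropy Q f := by
  rw [entropy_eq_add_of_le hQP hf, expect_div]
  refine add_le_add_right (expect_le_expect fun z _ => ?_) _
  have hP := cellAverage_nonneg (P := P) hf z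
  have hQ := cellAverage_nonneg (P := Q) hf z
  rw [mul_div_assoc]
  refine mul_le_mul_of_nonneg_left ?_ hP
  by_cases hz : cellAverage Q f z ≤ cellAverage P f z / 4
  · rw [dropIndicator, Set.indicator_of_mem (by exact hz)]
    refine quarter_le_klFun (div_nonneg hQ hP) (div_le_of_le_mul₀ hP (by norm_num) ?_)
    linarith
  · rw [dropIndicator, Set.indicator_of_notMem (by exact hz), zero_div]
    exact klFun_nonneg (div_nonneg hQ hP)

end CellAverage

/-! ### The cut norm and weak regularity -/

section Kernel

variable {Ω : Type*}

lemma prod_self_mono {P Q : Setoid Ω} (h : Q ≤ P) : Q.prod Q ≤ P.prod P :=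
  fun _ _ hz => ⟨h hz.1, h hz.2⟩

lemma card_quotient_inf_le [Finite Ω] (P Q : Setoid Ω) :
    Nat.card (Quotient (P ⊓ Q)) ≤ Nat.card (Quotient P) * Nat.card (Quotient Q) := by
  rw [← Nat.card_prod]
  refine Nat.card_le_card_of_injective
    (fun x => (Setoid.map_of_le (inf_le_left : P ⊓ Q ≤ P) x,
      Setoid.map_of_le (inf_le_right : P ⊓ Q ≤ Q) x)) ?_
  rintro ⟨x⟩ ⟨y⟩ h
  obtain ⟨hP, hQ⟩ := Prod.ext_iff.1 h
  exact Quotient.sound ⟨Quotient.exact hP, Quotient.exact hQ⟩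

lemma card_quotient_ker_le {β : Type*} [Finite β] (g : Ω → β) :
    Nat.card (Quotient (Setoid.ker g)) ≤ Nat.card β :=
  Nat.card_le_card_of_injective _ (Setoid.kerLift_injective g)

variable [Fintype Ω] {P : Setoid Ω} {f : Ω × Ω → ℝ}

lemma cell_prod (P Q : Setoid Ω) (z : Ω × Ω) :
    cell (P.prod Q) z = cell P z.1 ×ˢ cell Q z.2 := by
  ext w
  simp only [mem_cell, mem_product]
  rfl

lemma cellAverage_prod (P Q : Setoid Ω) (f : Ω × Ω → ℝ) (z : Ω × Ω) :
    cellAverage (P.prod Q) f z = 𝔼 s ∈ cell P z.1, 𝔼 t ∈ cell Q z.2, f (s, t) := by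
  rw [cellAverage, cell_prod, expect_product]

lemma cellAverage_prod_swap (hf : ∀ z, f z.swap = f z) (z : Ω × Ω) :
    cellAverage (P.prod P) f z.swap = cellAverage (P.prod P) f z := by
  rw [cellAverage_prod, cellAverage_prod, expect_comm]
  exact expect_congr rfl fun s _ => expect_congr rfl fun t _ => hf (s, t)

/-- The cut norm of the kernel `k`: the largest absolute value of its integral over a rectangle. -/
noncomputable def cutNorm (k : Ω × Ω → ℝ) : ℝ :=
  ⨆ R : Set Ω × Set Ω, |𝔼 z, (R.1 ×ˢ R.2).indicator k z|

lemma abs_expect_indicator_le_cutNorm (k : Ω × Ω → ℝ) (S T : Set Ω) :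
    |𝔼 z, (S ×ˢ T).indicator k z| ≤ cutNorm k :=
  le_ciSup (f := fun R : Set Ω × Set Ω => |𝔼 z, (R.1 ×ˢ R.2).indicator k z|)
    (Set.finite_range _).bddAbove (S, T)

lemma exists_cutNorm_eq (k : Ω × Ω → ℝ) :
    ∃ S T : Set Ω, cutNorm k = |𝔼 z, (S ×ˢ T).indicator k z| :=
  let ⟨R, hR⟩ := exists_eq_ciSup_of_finite
    (f := fun R : Set Ω × Set Ω => |𝔼 z, (R.1 ×ˢ R.2).indicator k z|)
  ⟨R.1, R.2, hR.symm⟩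

lemma cutNorm_nonneg (k : Ω × Ω → ℝ) : 0 ≤ cutNorm k :=
  (abs_nonneg _).trans (abs_expect_indicator_le_cutNorm k ∅ ∅)

lemma exists_energy_increment (P : Setoid Ω) (f : Ω × Ω → ℝ) :
    ∃ Q ≤ P, Nat.card (Quotient Q) ≤ Nat.card (Quotient P) * 4 ∧
      energy (P.prod P) f + cutNorm (f - cellAverage (P.prod P) f) ^ 2 ≤ energy (Q.prod Q) f := by
  obtain ⟨S, T, hST⟩ := exists_cutNorm_eq (f - cellAverage (P.prod P) f)
  let Q := P ⊓ (Setoid.ker (· ∈ S) ⊓ Setoid.ker (· ∈ T))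
  have hQP : Q.prod Q ≤ P.prod P := prod_self_mono inf_le_left
  refine ⟨Q, inf_le_left, ?_, ?_⟩
  · have hker (U : Set Ω) : Nat.card (Quotient (Setoid.ker (· ∈ U))) ≤ 2 :=
      (card_quotient_ker_le _).trans (by simp)
    exact (card_quotient_inf_le _ _).trans <| Nat.mul_le_mul_left _ <|
      (card_quotient_inf_le _ _).trans (Nat.mul_le_mul (hker S) (hker T))
  set D : Ω × Ω → ℝ := fun z => cellAverage (Q.prod Q) f z - cellAverage (P.prod P) f z with hD
  let r : Ω × Ω → ℝ := (S ×ˢ T).indicator 1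
  have hr ⦃z w : Ω × Ω⦄ (h : Q.prod Q z w) : r z = r w := by
    have hmem : z ∈ S ×ˢ T ↔ w ∈ S ×ˢ T :=
      and_congr (iff_of_eq h.1.2.1) (iff_of_eq h.2.2.2)
    simp only [r, Set.indicator, hmem, Pi.one_apply]
  have hr_sq : 𝔼 z, r z ^ 2 ≤ 1 := by
    refine (expect_mem_unitInterval fun z _ => ?_).2
    by_cases hz : z ∈ S ×ˢ T <;> simp [r, hz, -Set.mem_prod]
  have hcut : 𝔼 z, (S ×ˢ T).indicator (f - cellAverage (P.prod P) f) z = 𝔼 z, r z * D z := by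
    have hind (z : Ω × Ω) : (S ×ˢ T).indicator (f - cellAverage (P.prod P) f) z =
        r z * f z - r z * cellAverage (P.prod P) f z := by
      by_cases hz : z ∈ S ×ˢ T <;> simp [r, hz, -Set.mem_prod]
    simp only [hind, hD, mul_sub, expect_sub_distrib, expect_mul_cellAverage hr]
  rw [energy_eq_add_of_le hQP, hST, sq_abs, hcut]
  gcongr
  calc (𝔼 z, r z * D z) ^ 2 ≤ (𝔼 z, r z ^ 2) * 𝔼 z, D z ^ 2 :=
        expect_mul_sq_le_sq_mul_sq univ r D
    _ ≤ 𝔼 z, D z ^ 2 :=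
        mul_le_of_le_one_left (expect_nonneg fun z _ => sq_nonneg _) hr_sq

lemma exists_weaklyRegular_refinement (hf : ∀ z, f z ∈ unitInterval) {η : ℝ} (hη : 0 ≤ η) (N : ℕ)
    (P : Setoid Ω) (hN : 1 ≤ energy (P.prod P) f + N * η ^ 2) :
    ∃ Q ≤ P, Nat.card (Quotient Q) ≤ Nat.card (Quotient P) * 4 ^ N ∧
      cutNorm (f - cellAverage (Q.prod Q) f) ≤ η := by
  induction N generalizing P with
  | zero =>
    refine ⟨P, le_rfl, by simp, ?_⟩
    obtain ⟨Q, -, -, henergy⟩ := exists_energy_increment P f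
    have : energy (Q.prod Q) f ≤ 1 := energy_le_one hf
    have : cutNorm (f - cellAverage (P.prod P) f) ^ 2 ≤ 0 := by norm_num at hN; linarith
    exact (pow_eq_zero_iff two_ne_zero).1 (this.antisymm (sq_nonneg _)) ▸ hη
  | succ N ih =>
    rcases le_or_gt (cutNorm (f - cellAverage (P.prod P) f)) η with hreg | hirr
    · exact ⟨P, le_rfl, Nat.le_mul_of_pos_right _ (by positivity), hreg⟩
    obtain ⟨Q, hQP, hcard, henergy⟩ := exists_energy_increment P f
    have hsq : η ^ 2 ≤ cutNorm (f - cellAverage (P.prod P) f) ^ 2 := by gcongr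
    obtain ⟨R, hRQ, hR, hreg⟩ := ih Q (by push_cast at hN; linarith)
    refine ⟨R, hRQ.trans hQP, hR.trans ?_, hreg⟩
    rw [pow_succ', ← mul_assoc]
    gcongr

end Kernel
/-! ### The counting lemma -/

section CutNormWeights

variable {Ω : Type*} [Fintype Ω]

lemma expect_mul_le_expect_indicator {u : Ω → ℝ} (hu : ∀ x, u x ∈ unitInterval) (F : Ω → ℝ) :
    𝔼 x, u x * F x ≤ 𝔼 x, {x | 0 < F x}.indicator F x := by
  refine expect_le_expect fun x _ => ?_
  by_cases hx : 0 < F x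
  · simpa [hx] using mul_le_of_le_one_left hx.le (hu x).2
  · simpa [hx] using mul_nonpos_of_nonneg_of_nonpos (hu x).1 (not_lt.1 hx)

lemma expect_mul_mul_le_cutNorm (k : Ω × Ω → ℝ) {u w : Ω → ℝ} (hu : ∀ x, u x ∈ unitInterval)
    (hw : ∀ y, w y ∈ unitInterval) : 𝔼 x, 𝔼 y, u x * w y * k (x, y) ≤ cutNorm k := by
  let F x := 𝔼 y, w y * k (x, y)
  let S := {x | 0 < F x}
  let F' y := 𝔼 x, S.indicator (fun x => k (x, y)) x
  let T := {y | 0 < F' y}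
  calc 𝔼 x, 𝔼 y, u x * w y * k (x, y) = 𝔼 x, u x * F x := by
        simp only [F, mul_expect, mul_assoc]
    _ ≤ 𝔼 x, S.indicator F x := expect_mul_le_expect_indicator hu F
    _ = 𝔼 y, w y * F' y := by
        simp only [F', mul_expect]
        rw [expect_comm]
        refine expect_congr rfl fun x _ => ?_
        by_cases hx : x ∈ S <;> simp [hx, F]
    _ ≤ 𝔼 y, T.indicator F' y := expect_mul_le_expect_indicator hw F'
    _ = 𝔼 z, (S ×ˢ T).indicator k z := by
        rw [← univ_product_univ, expect_product, expect_comm]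
        refine expect_congr rfl fun y _ => ?_
        by_cases hy : y ∈ T <;> simp [hy, F', Set.indicator_apply]
    _ ≤ cutNorm k := (le_abs_self _).trans (abs_expect_indicator_le_cutNorm k S T)

lemma cutNorm_neg (k : Ω × Ω → ℝ) : cutNorm (-k) = cutNorm k := by
  simp only [cutNorm, Set.indicator_neg', Pi.neg_apply, expect_neg_distrib, abs_neg]

lemma abs_expect_mul_mul_le_cutNorm (k : Ω × Ω → ℝ) {u w : Ω → ℝ} (hu : ∀ x, u x ∈ unitInterval)
    (hw : ∀ y, w y ∈ unitInterval) : |𝔼 x, 𝔼 y, u x * w y * k (x, y)| ≤ cutNorm k := by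
  refine abs_le'.2 ⟨expect_mul_mul_le_cutNorm k hu hw, ?_⟩
  simpa only [Pi.neg_apply, mul_neg, expect_neg_distrib, cutNorm_neg] using
    expect_mul_mul_le_cutNorm (-k) hu hw

end CutNormWeights

lemma pow_card_mul_one_sub_le_prod {ι : Type*} (s : Finset ι) {y : ι → ℝ} (hy : ∀ i, 0 ≤ y i)
    {κ : ℝ} (hκ : 0 ≤ κ) : κ ^ #s * (1 - ∑ i ∈ s, {i | y i < κ}.indicator 1 i) ≤ ∏ i ∈ s, y i := by
  have low_nonneg : ∀ i ∈ s, (0 : ℝ) ≤ {i | y i < κ}.indicator 1 i := fun i _ =>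
    Set.indicator_nonneg (fun _ _ => zero_le_one) i
  by_cases hs : ∃ i ∈ s, y i < κ
  · obtain ⟨i, his, hi⟩ := hs
    have : 1 ≤ ∑ i ∈ s, {i | y i < κ}.indicator (1 : ι → ℝ) i := by
      simpa [hi] using single_le_sum low_nonneg his
    exact (mul_nonpos_of_nonneg_of_nonpos (by positivity) (by linarith)).trans
      (prod_nonneg fun i _ => hy i)
  · push Not at hs
    calc κ ^ #s * (1 - ∑ i ∈ s, {i | y i < κ}.indicator 1 i) ≤ κ ^ #s :=
          mul_le_of_le_one_right (by positivity) (by linarith [sum_nonneg low_nonneg])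
      _ = ∏ _ ∈ s, κ := (prod_const κ).symm
      _ ≤ ∏ i ∈ s, y i := prod_le_prod (fun _ _ => hκ) hs

section Counting

variable {α Ω : Type*}

/-- On resampling the coordinates `a` and `b`, the weight `W` splits into a factor for `a` and a
factor for `b`. Such a weight can be absorbed into the cut norm of a kernel at `(a, b)`. -/
def SeparableAt (a b : α) (W : (α → Ω) → ℝ) : Prop :=
  ∀ x, ∃ u w : Ω → ℝ, (∀ s, u s ∈ unitInterval) ∧ (∀ t, w t ∈ unitInterval) ∧
    ∀ s t, W (Function.update (Function.update x a s) b t) = u s * w t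

namespace SeparableAt

variable {a b : α}

lemma one : SeparableAt a b fun _ : α → Ω => (1 : ℝ) := fun _ =>
  ⟨1, 1, fun _ => unitInterval.one_mem, fun _ => unitInterval.one_mem, by simp⟩

lemma mul {W₁ W₂ : (α → Ω) → ℝ} (h₁ : SeparableAt a b W₁) (h₂ : SeparableAt a b W₂) :
    SeparableAt a b fun x => W₁ x * W₂ x := fun x =>
  let ⟨u₁, w₁, hu₁, hw₁, h₁⟩ := h₁ x
  let ⟨u₂, w₂, hu₂, hw₂, h₂⟩ := h₂ x
  ⟨u₁ * u₂, w₁ * w₂, fun s => unitInterval.mul_mem (hu₁ s) (hu₂ s),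
    fun t => unitInterval.mul_mem (hw₁ t) (hw₂ t), fun s t => by
      simp only [Pi.mul_apply, h₁, h₂, mul_mul_mul_comm]⟩

lemma prod {ι : Type*} {s : Finset ι} {W : ι → (α → Ω) → ℝ} (h : ∀ i ∈ s, SeparableAt a b (W i)) :
    SeparableAt a b fun x => ∏ i ∈ s, W i x := by
  simpa only [← prod_apply] using prod_induction W (SeparableAt a b) (fun _ _ => mul) one h

lemma kernel {e : α × α} (he : e ≠ (a, b)) (he' : e ≠ (b, a)) {f : Ω × Ω → ℝ}
    (hf : ∀ z, f z ∈ unitInterval) : SeparableAt a b fun x => f (x e.1, x e.2) := by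
  intro x
  by_cases hb : b = e.1 ∨ b = e.2
  · refine ⟨1, fun t => f (Function.update x b t e.1, Function.update x b t e.2),
      fun _ => unitInterval.one_mem, fun t => hf _, fun s t => ?_⟩
    have update_eq {c : α} (hc : c = b ∨ c ≠ a) :
        Function.update (Function.update x a s) b t c = Function.update x b t c := by
      obtain rfl | hc := hc
      · simp
      · by_cases c = b <;> simp [Function.update_apply, hc]
    have hcoord : (e.1 = b ∨ e.1 ≠ a) ∧ (e.2 = b ∨ e.2 ≠ a) := by
      rw [Ne, Prod.ext_iff] at he he'
      grind
    simp [update_eq hcoord.1, update_eq hcoord.2]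
  · refine ⟨fun s => f (Function.update x a s e.1, Function.update x a s e.2), 1,
      fun s => hf _, fun _ => unitInterval.one_mem, fun s t => ?_⟩
    simp only [not_or, ← ne_eq] at hb
    simp [Function.update_of_ne hb.1.symm, Function.update_of_ne hb.2.symm]

end SeparableAt

variable [Fintype α]

lemma expect_piFinset_update (V : α → Finset Ω) (a : α) (K : (α → Ω) → ℝ) :
    𝔼 x ∈ Fintype.piFinset V, 𝔼 s ∈ V a, K (Function.update x a s) =
      𝔼 x ∈ Fintype.piFinset V, K x := by
  have exchange : 𝔼 p ∈ Fintype.piFinset V ×ˢ V a, K (Function.update p.1 a p.2) =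
      𝔼 p ∈ Fintype.piFinset V ×ˢ V a, K p.1 := by
    let σ : (α → Ω) × Ω → (α → Ω) × Ω := fun p => (Function.update p.1 a p.2, p.1 a)
    have hσ_mem : ∀ p ∈ Fintype.piFinset V ×ˢ V a, σ p ∈ Fintype.piFinset V ×ˢ V a := by
      intro p hp
      obtain ⟨hx, hs⟩ := mem_product.1 hp
      rw [Fintype.mem_piFinset] at hx
      refine mem_product.2 ⟨Fintype.mem_piFinset.2 fun b => ?_, hx a⟩
      obtain rfl | hb := eq_or_ne b a
      · simpa [σ] using hs
      · simpa [σ, hb] using hx b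
    have hσ_inv (p : (α → Ω) × Ω) : σ (σ p) = p := by simp [σ]
    exact expect_nbij' σ σ hσ_mem hσ_mem (fun p _ => hσ_inv p) (fun p _ => hσ_inv p) fun _ _ => rfl
  rw [expect_product, expect_product] at exchange
  refine exchange.trans (expect_congr rfl fun x hx => ?_)
  exact expect_const ⟨x a, Fintype.mem_piFinset.1 hx a⟩ (K x)

lemma expect_piFinset_update_update (V : α → Finset Ω) (a b : α) (K : (α → Ω) → ℝ) :
    𝔼 x ∈ Fintype.piFinset V, 𝔼 s ∈ V a, 𝔼 t ∈ V b,
      K (Function.update (Function.update x a s) b t) = 𝔼 x ∈ Fintype.piFinset V, K x := by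
  rw [expect_piFinset_update V a fun x => 𝔼 t ∈ V b, K (Function.update x b t),
    expect_piFinset_update]

variable [Fintype Ω] {E : Finset (α × α)} {f g : Ω × Ω → ℝ}

lemma SeparableAt.abs_expect_mul_le_cutNorm {a b : α} {W : (α → Ω) → ℝ} (hab : a ≠ b)
    (hW : SeparableAt a b W) (k : Ω × Ω → ℝ) : |𝔼 x, W x * k (x a, x b)| ≤ cutNorm k := by
  rw [← Fintype.piFinset_univ, ← expect_piFinset_update_update _ a b]
  rcases (Fintype.piFinset fun _ : α => (univ : Finset Ω)).eq_empty_or_nonempty with hempty | hne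
  · simpa only [hempty, expect_empty, abs_zero] using cutNorm_nonneg k
  refine (abs_expect_le _ _).trans (expect_le hne fun x _ => ?_)
  obtain ⟨u, w, hu, hw, hsep⟩ := hW x
  simpa only [hsep, Function.update_self, Function.update_of_ne hab] using
    abs_expect_mul_mul_le_cutNorm k hu hw

/-- The density of homomorphisms from the directed graph with edge set `E` to the weighted directed
graph with edge weights `f`. -/
noncomputable def homDensity (E : Finset (α × α)) (f : Ω × Ω → ℝ) : ℝ :=
  𝔼 x : α → Ω, ∏ e ∈ E, f (x e.1, x e.2)

lemma abs_expect_mul_prod_sub_le (hE : ∀ e ∈ E, e.swap ∉ E) (hf : ∀ z, f z ∈ unitInterval)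
    (hg : ∀ z, g z ∈ unitInterval) {W : (α → Ω) → ℝ} (hW : ∀ e ∈ E, SeparableAt e.1 e.2 W) :
    |𝔼 x, W x * (∏ e ∈ E, f (x e.1, x e.2) - ∏ e ∈ E, g (x e.1, x e.2))| ≤
      #E * cutNorm (f - g) := by
  induction E using Finset.induction_on generalizing W with
  | empty => simp
  | insert e E he ih =>
    have he_ne : e.1 ≠ e.2 := fun h => by
      have hswap : e.swap = e := Prod.ext h.symm h
      exact hE e (mem_insert_self _ _) (by simp [hswap])
    have ne_e {e' : α × α} (he' : e' ∈ E) : e' ≠ e := fun h => he (h ▸ he')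
    have ne_swap {e' : α × α} (he' : e' ∈ E) : e' ≠ e.swap := fun h =>
      hE e (mem_insert_self _ _) (mem_insert_of_mem (h ▸ he'))
    have replace_e : |𝔼 x, W x * (∏ e ∈ E, f (x e.1, x e.2)) * (f - g) (x e.1, x e.2)| ≤
        cutNorm (f - g) :=
      ((hW e (mem_insert_self _ _)).mul <| .prod fun e' he' =>
        .kernel (ne_e he') (ne_swap he') hf).abs_expect_mul_le_cutNorm he_ne _
    have replace_E := ih (fun e' he' h => hE e' (mem_insert_of_mem he') (mem_insert_of_mem h))
      (W := fun x => W x * g (x e.1, x e.2)) fun e' he' =>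
        (hW e' (mem_insert_of_mem he')).mul <| .kernel (ne_e he').symm
          (fun h => ne_swap he' (by rw [h]; rfl)) hg
    have telescope (x : α → Ω) :
        W x * (∏ e ∈ insert e E, f (x e.1, x e.2) - ∏ e ∈ insert e E, g (x e.1, x e.2)) =
        W x * (∏ e ∈ E, f (x e.1, x e.2)) * (f - g) (x e.1, x e.2) +
        W x * g (x e.1, x e.2) *
          (∏ e ∈ E, f (x e.1, x e.2) - ∏ e ∈ E, g (x e.1, x e.2)) := by
      simp only [prod_insert he, Pi.sub_apply]
      ring
    rw [card_insert_of_notMem he, expect_congr rfl fun x _ => telescope x, expect_add_distrib]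
    refine (abs_add_le _ _).trans ?_
    push_cast
    linarith

lemma abs_homDensity_sub_le (hE : ∀ e ∈ E, e.swap ∉ E) (hf : ∀ z, f z ∈ unitInterval)
    (hg : ∀ z, g z ∈ unitInterval) :
    |homDensity E f - homDensity E g| ≤ #E * cutNorm (f - g) := by
  simpa only [homDensity, ← expect_sub_distrib, one_mul] using
    abs_expect_mul_prod_sub_le hE hf hg (W := fun _ => 1) fun _ _ => .one

lemma exists_refinement_abs_homDensity_sub_le (hE : ∀ e ∈ E, e.swap ∉ E)
    (hf : ∀ z, f z ∈ unitInterval) {T : ℕ} (hT : 0 < T) (r : ℕ) (P : Setoid Ω) :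
    ∃ Q ≤ P, Nat.card (Quotient Q) ≤ Nat.card (Quotient P) * 4 ^ T ^ (2 * r) ∧
      |homDensity E f - homDensity E (cellAverage (Q.prod Q) f)| ≤ #E * (1 / T ^ r) := by
  have henergy : 1 ≤ energy (P.prod P) f + (T ^ (2 * r) : ℕ) * (1 / (T : ℝ) ^ r) ^ 2 := by
    have hone : ((T ^ (2 * r) : ℕ) : ℝ) * (1 / (T : ℝ) ^ r) ^ 2 = 1 := by
      rw [one_div_pow, ← pow_mul, Nat.cast_pow, mul_comm r, mul_one_div_cancel (by positivity)]
    linarith [energy_nonneg (P.prod P) f]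
  obtain ⟨Q, hQP, hcard, hcut⟩ :=
    exists_weaklyRegular_refinement hf (by positivity) (T ^ (2 * r)) P henergy
  exact ⟨Q, hQP, hcard, (abs_homDensity_sub_le hE hf (cellAverage_mem_unitInterval hf)).trans
    (mul_le_mul_of_nonneg_left hcut (Nat.cast_nonneg _))⟩

lemma pow_mul_expect_piFinset_le {κ : ℝ} (hκ : 0 ≤ κ) {V : α → Finset Ω}
    (hV : ∀ a, κ * Fintype.card Ω ≤ #(V a)) {F : (α → Ω) → ℝ} (hF : ∀ x, 0 ≤ F x) :
    κ ^ Fintype.card α * 𝔼 x ∈ Fintype.piFinset V, F x ≤ 𝔼 x, F x := by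
  rcases (Fintype.piFinset V).eq_empty_or_nonempty with hempty | hne
  · simpa [hempty] using expect_nonneg fun x _ => hF x
  have hcard : (κ * Fintype.card Ω) ^ Fintype.card α ≤ #(Fintype.piFinset V) := by
    rw [Fintype.card_piFinset, Nat.cast_prod, ← card_univ (α := α), ← prod_const]
    exact prod_le_prod (fun _ _ => by positivity) fun a _ => hV a
  have hpi : (0 : ℝ) < #(Fintype.piFinset V) := mod_cast hne.card_pos
  have huniv : (0 : ℝ) < #(univ : Finset (α → Ω)) := mod_cast (hne.mono (subset_univ _)).card_pos
  have hsum : ∑ x ∈ Fintype.piFinset V, F x ≤ ∑ x, F x :=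
    sum_le_sum_of_subset_of_nonneg (subset_univ _) fun x _ _ => hF x
  rw [expect_eq_sum_div_card, expect_eq_sum_div_card, ← mul_div_assoc, div_le_div_iff₀ hpi huniv,
    mul_right_comm, mul_comm _ (#(Fintype.piFinset V) : ℝ)]
  refine mul_le_mul ?_ hsum (sum_nonneg fun x _ => hF x) hpi.le
  rwa [card_univ, Fintype.card_fun, Nat.cast_pow, ← mul_pow]

lemma le_homDensity_of_rarely_lt [Nonempty Ω] (hE : ∀ e ∈ E, e.1 ≠ e.2) {κ : ℝ} (hκ : 0 < κ)
    (hg : ∀ z, 0 ≤ g z) {V : α → Finset Ω} (hV : ∀ a, κ * Fintype.card Ω ≤ #(V a))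
    (hrare : ∀ e ∈ E,
      𝔼 s ∈ V e.1, 𝔼 t ∈ V e.2, {z | g z < κ}.indicator 1 (s, t) ≤ (1 / (2 * #E) : ℝ)) :
    κ ^ #E * κ ^ Fintype.card α / 2 ≤ homDensity E g := by
  let low : Ω × Ω → ℝ := {z | g z < κ}.indicator 1
  have hne : (Fintype.piFinset V).Nonempty := Fintype.piFinset_nonempty.2 fun a =>
    card_pos.1 (by exact_mod_cast (by positivity : 0 < κ * Fintype.card Ω).trans_le (hV a))
  have hlow : ∀ e ∈ E, 𝔼 x ∈ Fintype.piFinset V, low (x e.1, x e.2) ≤ 1 / (2 * #E) := by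
    intro e he
    rw [← expect_piFinset_update_update V e.1 e.2]
    simp only [Function.update_self, Function.update_of_ne (hE e he)]
    exact (expect_const hne _).trans_le (hrare e he)
  have hsum : 𝔼 x ∈ Fintype.piFinset V, ∑ e ∈ E, low (x e.1, x e.2) ≤ 1 / 2 := by
    rw [expect_sum_comm]
    refine (sum_le_card_nsmul E _ _ hlow).trans ?_
    rw [nsmul_eq_mul, ← div_div, mul_div_assoc', mul_one_div]
    exact div_le_of_le_mul₀ (by positivity) (by norm_num) (by linarith)
  calc κ ^ #E * κ ^ Fintype.card α / 2 = κ ^ Fintype.card α * (κ ^ #E * (1 - 1 / 2)) := by ring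
    _ ≤ κ ^ Fintype.card α *
        (κ ^ #E * (1 - 𝔼 x ∈ Fintype.piFinset V, ∑ e ∈ E, low (x e.1, x e.2))) := by gcongr
    _ = κ ^ Fintype.card α * 𝔼 x ∈ Fintype.piFinset V,
          κ ^ #E * (1 - ∑ e ∈ E, low (x e.1, x e.2)) := by
        rw [← mul_expect, expect_sub_distrib, expect_const hne]
    _ ≤ κ ^ Fintype.card α * 𝔼 x ∈ Fintype.piFinset V, ∏ e ∈ E, g (x e.1, x e.2) := by
        gcongr with x
        exact pow_card_mul_one_sub_le_prod E (fun e => hg (x e.1, x e.2)) hκ.le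
    _ ≤ homDensity E g :=
        pow_mul_expect_piFinset_le hκ.le hV fun x => prod_nonneg fun _ _ => hg _

end Counting

/-! ### Homomorphisms and cores -/

section Graph

variable {α Ω : Type*} {H : SimpleGraph α}

/-- Destroying all copies of `H` in `G` takes the deletion of at least one in `e(H)` of the edges
of `G`. -/
def IsCore (H : SimpleGraph α) (G : SimpleGraph Ω) : Prop :=
  ∀ G' : SimpleGraph Ω, H.Free G' →
    G.edgeSet.ncard ≤ H.edgeSet.ncard * (G.edgeSet \ G'.edgeSet).ncard

lemma IsCore.sup_of_isContained [Finite Ω] {G K : SimpleGraph Ω} (hG : IsCore H G)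
    (hHK : H.IsContained K) (hK : K.edgeSet.ncard = H.edgeSet.ncard) (hdisj : Disjoint G K) :
    IsCore H (G ⊔ K) := by
  intro G' hfree
  have hpos : 0 < (K.edgeSet \ G'.edgeSet).ncard := (Set.ncard_pos).2 <|
    Set.sdiff_nonempty.2 fun h => hfree (hHK.mono_right (SimpleGraph.edgeSet_subset_edgeSet.1 h))
  have hdisj' := (SimpleGraph.disjoint_edgeSet.2 hdisj).mono (sdiff_le (b := G'.edgeSet))
    (sdiff_le (b := G'.edgeSet))
  rw [SimpleGraph.edgeSet_sup, Set.union_sdiff_distrib, Set.ncard_union_eq hdisj', mul_add]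
  exact (Set.ncard_union_le _ _).trans <|
    Nat.add_le_add (hG G' hfree) (hK.trans_le (Nat.le_mul_of_pos_right _ hpos))

/-- Think of `G₀` as the union of a maximal family of edge-disjoint copies of `H` in `G`. -/
lemma exists_isCore [Finite α] [Finite Ω] (hH : H ≠ ⊥) (G : SimpleGraph Ω) :
    ∃ G₀ ≤ G, H.Free (G \ G₀) ∧ IsCore H G₀ := by
  obtain ⟨G₀, ⟨hle, hcore⟩, hmax⟩ := {K | K ≤ G ∧ IsCore H K}.toFinite.exists_maximal
    ⟨⊥, bot_le, fun _ _ => by simp⟩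
  refine ⟨G₀, hle, fun ⟨φ⟩ => hH ?_, hcore⟩
  let K : SimpleGraph Ω := H.map φ.toEmbedding
  have hK : K ≤ G \ G₀ := (SimpleGraph.map_le_iff_le_comap _ _ _).2 fun _ _ => φ.toHom.map_adj
  have hHK : H.IsContained K := ⟨(SimpleGraph.Embedding.map φ.toEmbedding H).toCopy⟩
  have hcardK : K.edgeSet.ncard = H.edgeSet.ncard := by
    rw [SimpleGraph.edgeSet_map, Set.ncard_image_of_injective _ (Function.Embedding.injective _)]
  have hsup := hcore.sup_of_isContained hHK hcardK (disjoint_sdiff_self_right.mono_right hK)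
  have hKbot : K = ⊥ := le_bot_iff.1 <| disjoint_sdiff_self_left hK
    (le_sup_right.trans (hmax ⟨sup_le hle (hK.trans sdiff_le), hsup⟩ le_sup_left))
  rwa [← SimpleGraph.edgeSet_eq_empty, ← Set.ncard_eq_zero, ← hcardK, Set.ncard_eq_zero,
    SimpleGraph.edgeSet_eq_empty]

variable [Fintype α]

/-- An orientation of the graph `H`: each edge is listed as exactly one of its two ordered pairs. -/
noncomputable def orientedEdges (H : SimpleGraph α) : Finset (α × α) :=
  H.edgeFinset.image Quot.out

lemma mem_orientedEdges {e : α × α} :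
    e ∈ orientedEdges H ↔ H.Adj e.1 e.2 ∧ Quot.out s(e.1, e.2) = e := by
  constructor
  · intro he
    obtain ⟨s, hs, rfl⟩ := mem_image.1 he
    have hmk : s(s.out.1, s.out.2) = s := Quot.out_eq s
    exact ⟨by rwa [← SimpleGraph.mem_edgeSet, hmk, ← SimpleGraph.mem_edgeFinset], by rw [hmk]⟩
  · rintro ⟨hadj, hout⟩
    exact mem_image.2 ⟨s(e.1, e.2), SimpleGraph.mem_edgeFinset.2 hadj, hout⟩

lemma card_orientedEdges (H : SimpleGraph α) : #(orientedEdges H) = H.edgeSet.ncard := by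
  rw [Set.ncard_eq_toFinset_card']
  exact card_image_of_injective _ fun s t h => by rw [← Quot.out_eq s, h, Quot.out_eq]

lemma card_orientedEdges_pos (hH : H ≠ ⊥) : 0 < #(orientedEdges H) := by
  rwa [card_orientedEdges, Set.ncard_pos, SimpleGraph.edgeSet_nonempty]

lemma swap_notMem_orientedEdges {e : α × α} (he : e ∈ orientedEdges H) :
    e.swap ∉ orientedEdges H := by
  intro he'
  have hout : Quot.out s(e.1, e.2) = Quot.out s(e.swap.1, e.swap.2) :=
    congrArg Quot.out Sym2.eq_swap
  rw [(mem_orientedEdges.1 he).2, (mem_orientedEdges.1 he').2] at hout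
  exact (mem_orientedEdges.1 he).1.ne (congrArg Prod.fst hout)

lemma mem_orientedEdges_or_swap_mem {a b : α} (hab : H.Adj a b) :
    (a, b) ∈ orientedEdges H ∨ (b, a) ∈ orientedEdges H := by
  obtain h | h := Sym2.eq_iff.1 (Quot.out_eq s(a, b) : s((Quot.out s(a, b)).1, _) = s(a, b))
  · exact .inl (mem_orientedEdges.2 ⟨hab, Prod.ext h.1 h.2⟩)
  · exact .inr (mem_orientedEdges.2 ⟨hab.symm, by rw [Sym2.eq_swap]; exact Prod.ext h.1 h.2⟩)

/-- The adjacency matrix of `G`, as a kernel. -/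
noncomputable def adjKernel (G : SimpleGraph Ω) : Ω × Ω → ℝ := {z | G.Adj z.1 z.2}.indicator 1

lemma adjKernel_mem_unitInterval (G : SimpleGraph Ω) (z : Ω × Ω) :
    adjKernel G z ∈ unitInterval :=
  indicator_one_mem_unitInterval _ z

lemma adjKernel_swap (G : SimpleGraph Ω) (z : Ω × Ω) : adjKernel G z.swap = adjKernel G z := by
  simp [adjKernel, Set.indicator_apply, G.adj_comm]

variable [Fintype Ω]

lemma expect_adjKernel (G : SimpleGraph Ω) :
    𝔼 z, adjKernel G z = 2 * G.edgeSet.ncard / (Fintype.card Ω : ℝ) ^ 2 := by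
  have hsum : ∑ z, adjKernel G z = 2 * G.edgeSet.ncard := by
    rw [Set.ncard_eq_toFinset_card', ← Nat.cast_ofNat, ← Nat.cast_mul,
      ← SimpleGraph.edgeFinset, ← G.sum_degrees_eq_twice_card_edges, Fintype.sum_prod_type]
    simp [adjKernel, Set.indicator_apply, ← SimpleGraph.card_neighborFinset_eq_degree,
      SimpleGraph.neighborFinset_eq_filter]
  rw [expect_eq_sum_div_card, hsum, card_univ, Fintype.card_prod, Nat.cast_mul, sq]

lemma IsCore.expect_adjKernel_le {G G' : SimpleGraph Ω} (hG : IsCore H G) (hG' : G' ≤ G)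
    (hfree : H.Free G') : 𝔼 z, adjKernel G z ≤
      #(orientedEdges H) * (𝔼 z, adjKernel G z - 𝔼 z, adjKernel G' z) := by
  have hsub := SimpleGraph.edgeSet_subset_edgeSet.2 hG'
  have hcard : (G.edgeSet.ncard : ℝ) ≤
      #(orientedEdges H) * (G.edgeSet.ncard - G'.edgeSet.ncard) := by
    rw [card_orientedEdges, ← Nat.cast_sub (Set.ncard_le_ncard hsub), ← Set.ncard_sdiff hsub]
    exact_mod_cast hG G' hfree
  rw [expect_adjKernel, expect_adjKernel, ← sub_div, ← mul_sub, mul_div_assoc', mul_left_comm]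
  gcongr

lemma homDensity_orientedEdges (H : SimpleGraph α) (G : SimpleGraph Ω) :
    homDensity (orientedEdges H) (adjKernel G) =
      #{x : α → Ω | ∀ ⦃a b⦄, H.Adj a b → G.Adj (x a) (x b)} /
        (Fintype.card Ω : ℝ) ^ Fintype.card α := by
  have hiff (x : α → Ω) : (∀ e ∈ orientedEdges H, G.Adj (x e.1) (x e.2)) ↔
      ∀ ⦃a b⦄, H.Adj a b → G.Adj (x a) (x b) := by
    refine ⟨fun hx a b hab => ?_, fun hx e he => hx (mem_orientedEdges.1 he).1⟩
    obtain h | h := mem_orientedEdges_or_swap_mem hab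
    exacts [hx _ h, (hx _ h).symm]
  have hprod (x : α → Ω) : ∏ e ∈ orientedEdges H, adjKernel G (x e.1, x e.2) =
      if ∀ ⦃a b⦄, H.Adj a b → G.Adj (x a) (x b) then 1 else 0 := by
    simp only [adjKernel, Set.indicator_apply, Set.mem_ofPred_eq, Pi.one_apply, prod_ite_zero,
      hiff, prod_const_one]
  simp only [homDensity, hprod, expect_eq_sum_div_card, sum_boole, card_univ, Fintype.card_fun,
    Nat.cast_pow]

lemma homDensity_adjKernel_mono {G₀ G : SimpleGraph Ω} (hle : G₀ ≤ G) :
    homDensity (orientedEdges H) (adjKernel G₀) ≤ homDensity (orientedEdges H) (adjKernel G) := by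
  rw [homDensity_orientedEdges, homDensity_orientedEdges]
  gcongr
  exact fun hadj => hle hadj

end Graph

/-! ### The entropy increment -/

section GoodPairs

variable {α Ω : Type*} [Fintype Ω] {P Q : Setoid Ω} {f : Ω × Ω → ℝ} {κ δ : ℝ}

/-- The pairs of points whose `P`-cells are large, form a dense pair for `f`, and on most of whose
product the average of `f` does not drop when `P` is refined to `Q`. -/
def goodPairs (P Q : Setoid Ω) (f : Ω × Ω → ℝ) (κ δ : ℝ) : Set (Ω × Ω) :=
  {z | κ * Fintype.card Ω ≤ #(cell P z.1) ∧ κ * Fintype.card Ω ≤ #(cell P z.2) ∧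
    4 * κ ≤ cellAverage (P.prod P) f z ∧
    cellAverage (P.prod P) (dropIndicator (P.prod P) (Q.prod Q) f) z ≤ δ}

lemma dropIndicator_swap (hf : ∀ z, f z.swap = f z) (z : Ω × Ω) :
    dropIndicator (P.prod P) (Q.prod Q) f z.swap = dropIndicator (P.prod P) (Q.prod Q) f z := by
  simp only [dropIndicator, Set.indicator_apply, Set.mem_ofPred_eq, cellAverage_prod_swap hf,
    Pi.one_apply]

lemma swap_mem_goodPairs (hf : ∀ z, f z.swap = f z) {z : Ω × Ω} (hz : z ∈ goodPairs P Q f κ δ) :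
    z.swap ∈ goodPairs P Q f κ δ := by
  obtain ⟨h1, h2, hdense, hdrop⟩ := hz
  refine ⟨h2, h1, ?_, ?_⟩
  · rwa [cellAverage_prod_swap hf]
  · rwa [cellAverage_prod_swap (dropIndicator_swap hf)]

lemma sub_indicator_goodPairs_le (hf : ∀ z, f z ∈ unitInterval) (hδ : 0 < δ) (z : Ω × Ω) :
    f z - (goodPairs P Q f κ δ).indicator f z ≤
      {x | #(cell P x) < κ * Fintype.card Ω}.indicator 1 z.1 +
        {x | #(cell P x) < κ * Fintype.card Ω}.indicator 1 z.2 +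
        f z * {w | cellAverage (P.prod P) f w < 4 * κ}.indicator 1 z +
        f z * cellAverage (P.prod P) (dropIndicator (P.prod P) (Q.prod Q) f) z / δ := by
  set small : Ω → ℝ := {x | #(cell P x) < κ * Fintype.card Ω}.indicator 1 with hsmall
  set sparse : Ω × Ω → ℝ := {w | cellAverage (P.prod P) f w < 4 * κ}.indicator 1 with hsparse
  set drop := cellAverage (P.prod P) (dropIndicator (P.prod P) (Q.prod Q) f)
  have h1 : 0 ≤ small z.1 := (indicator_one_mem_unitInterval _ _).1
  have h2 : 0 ≤ small z.2 := (indicator_one_mem_unitInterval _ _).1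
  have h3 : 0 ≤ f z * sparse z := mul_nonneg (hf z).1 (indicator_one_mem_unitInterval _ _).1
  have h4 : 0 ≤ f z * drop z / δ := div_nonneg (mul_nonneg (hf z).1
    (cellAverage_mem_unitInterval (indicator_one_mem_unitInterval _) z).1) hδ.le
  by_cases hz : z ∈ goodPairs P Q f κ δ
  · rw [Set.indicator_of_mem hz, sub_self]
    positivity
  rw [Set.indicator_of_notMem hz, sub_zero]
  simp only [goodPairs, Set.mem_ofPred_eq, not_and_or, not_le] at hz
  rcases hz with hz | hz | hz | hz
  · have : small z.1 = 1 := by simp [hsmall, hz]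
    linarith [(hf z).2]
  · have : small z.2 = 1 := by simp [hsmall, hz]
    linarith [(hf z).2]
  · have : sparse z = 1 := by simp [hsparse, hz]
    rw [this, mul_one]
    linarith
  · have : f z ≤ f z * drop z / δ := by
      rw [le_div_iff₀ hδ]
      exact mul_le_mul_of_nonneg_left hz.le (hf z).1
    linarith

lemma expect_sub_expect_goodPairs_le [Nonempty Ω] (hf : ∀ z, f z ∈ unitInterval) (hκ : 0 ≤ κ)
    (hδ : 0 < δ) : 𝔼 z, f z - 𝔼 z, (goodPairs P Q f κ δ).indicator f z ≤
      2 * (Nat.card (Quotient P) * κ) + 4 * κ +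
        (𝔼 z, cellAverage (P.prod P) f z * dropIndicator (P.prod P) (Q.prod Q) f z) / δ := by
  have hsmall := expect_indicator_card_cell_lt_le P hκ
  have hsparse := expect_mul_indicator_cellAverage_lt_le (P.prod P) f (by positivity : 0 ≤ 4 * κ)
  have hmarginal (g : Ω → ℝ) : 𝔼 z : Ω × Ω, g z.1 = 𝔼 x, g x ∧ 𝔼 z : Ω × Ω, g z.2 = 𝔼 x, g x := by
    simp [← univ_product_univ, expect_product]
  rw [← expect_sub_distrib]
  refine (expect_le_expect fun z _ => sub_indicator_goodPairs_le hf hδ z).trans ?_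
  rw [expect_add_distrib, expect_add_distrib, expect_add_distrib, ← expect_div,
    expect_mul_cellAverage_comm, (hmarginal _).1, (hmarginal _).2]
  linarith

lemma le_homDensity_cellAverage_of_goodPairs [Fintype α] [Nonempty Ω] {E : Finset (α × α)}
    (hE : ∀ e ∈ E, e.1 ≠ e.2) (hκ : κ ∈ Set.Ioc 0 1) (hf : ∀ z, 0 ≤ f z)
    {φ : α → Ω} (hφ : ∀ e ∈ E, (φ e.1, φ e.2) ∈ goodPairs P Q f κ (1 / (2 * #E))) :
    κ ^ #E * κ ^ Fintype.card α / 2 ≤ homDensity E (cellAverage (Q.prod Q) f) := by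
  let large (a : α) : Prop := κ * Fintype.card Ω ≤ #(cell P (φ a))
  let V (a : α) : Finset Ω := if large a then cell P (φ a) else univ
  have hV (a : α) : κ * Fintype.card Ω ≤ #(V a) := by
    by_cases ha : large a
    · simpa only [V, if_pos ha]
    · simpa only [V, if_neg ha, card_univ] using mul_le_of_le_one_left (Nat.cast_nonneg _) hκ.2
  refine le_homDensity_of_rarely_lt hE hκ.1 (cellAverage_nonneg hf) hV fun e he => ?_
  obtain ⟨h1, h2, hdense, hdrop⟩ := hφ e he
  refine le_trans ?_ hdrop
  rw [cellAverage, cell_prod, ← expect_product']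
  simp only [V, large, if_pos h1, if_pos h2]
  refine expect_le_expect fun z hz => ?_
  have hcell : P.prod P (φ e.1, φ e.2) z := ⟨mem_cell.1 (mem_product.1 hz).1,
    mem_cell.1 (mem_product.1 hz).2⟩
  by_cases hlow : cellAverage (Q.prod Q) f z < κ
  · have hmem : cellAverage (Q.prod Q) f z ≤ cellAverage (P.prod P) f z / 4 := by
      rw [← cellAverage_congr f hcell]
      linarith
    simp [dropIndicator, hlow, hmem]
  · simpa [hlow, dropIndicator] using (indicator_one_mem_unitInterval _ z).1

end GoodPairs

section Increment

variable {α Ω : Type*} [Fintype α] [Fintype Ω] {H : SimpleGraph α} {G : SimpleGraph Ω}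
  {P Q : Setoid Ω} {κ δ : ℝ}

/-- The subgraph of `G` formed by the edges that are good pairs for the adjacency matrix of `G`. -/
def goodSubgraph (G : SimpleGraph Ω) (P Q : Setoid Ω) (κ δ : ℝ) : SimpleGraph Ω where
  Adj x y := G.Adj x y ∧ (x, y) ∈ goodPairs P Q (adjKernel G) κ δ
  symm := ⟨fun _ _ h => ⟨h.1.symm, swap_mem_goodPairs (adjKernel_swap G) h.2⟩⟩
  loopless := ⟨fun _ h => h.1.ne rfl⟩

lemma goodSubgraph_le : goodSubgraph G P Q κ δ ≤ G := fun _ _ h => h.1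

lemma adjKernel_goodSubgraph :
    adjKernel (goodSubgraph G P Q κ δ) =
      (goodPairs P Q (adjKernel G) κ δ).indicator (adjKernel G) := by
  rw [adjKernel, adjKernel, Set.indicator_indicator, Set.inter_comm]
  rfl

lemma free_goodSubgraph [Nonempty Ω] (hκ : κ ∈ Set.Ioc 0 1)
    (hhom : homDensity (orientedEdges H) (cellAverage (Q.prod Q) (adjKernel G)) <
      κ ^ #(orientedEdges H) * κ ^ Fintype.card α / 2) :
    H.Free (goodSubgraph G P Q κ (1 / (2 * #(orientedEdges H)))) := by
  rintro ⟨φ⟩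
  refine hhom.not_ge (le_homDensity_cellAverage_of_goodPairs (P := P)
    (fun e he => (mem_orientedEdges.1 he).1.ne) hκ
    (fun z => (adjKernel_mem_unitInterval G z).1) (φ := φ) fun e he => ?_)
  exact (φ.toHom.map_adj (mem_orientedEdges.1 he).1).2

lemma IsCore.expect_adjKernel_le_drop [Nonempty Ω] (hG : IsCore H G) (hH : H ≠ ⊥)
    (hκ : κ ∈ Set.Ioc 0 1)
    (hhom : homDensity (orientedEdges H) (cellAverage (Q.prod Q) (adjKernel G)) <
      κ ^ #(orientedEdges H) * κ ^ Fintype.card α / 2) :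
    𝔼 z, adjKernel G z ≤ #(orientedEdges H) * (2 * (Nat.card (Quotient P) * κ) + 4 * κ +
      2 * #(orientedEdges H) * 𝔼 z, cellAverage (P.prod P) (adjKernel G) z *
        dropIndicator (P.prod P) (Q.prod Q) (adjKernel G) z) := by
  have hm := card_orientedEdges_pos hH
  refine (hG.expect_adjKernel_le (goodSubgraph_le (P := P)) (free_goodSubgraph hκ hhom)).trans ?_
  rw [adjKernel_goodSubgraph]
  refine mul_le_mul_of_nonneg_left ?_ (Nat.cast_nonneg _)
  refine (expect_sub_expect_goodPairs_le (adjKernel_mem_unitInterval G) hκ.1.le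
    (by positivity)).trans_eq ?_
  rw [div_div_eq_mul_div, div_one, mul_comm (𝔼 z, _)]

lemma IsCore.div_le_expect_drop [Nonempty Ω] (hG : IsCore H G) (hH : H ≠ ⊥) {T : ℕ}
    (hT : 8 * #(orientedEdges H) ≤ T) (hd : 1 ≤ T * 𝔼 z, adjKernel G z)
    (hP : Nat.card (Quotient P) ≤ T)
    (hhom : homDensity (orientedEdges H) (cellAverage (Q.prod Q) (adjKernel G)) <
      (1 / (T : ℝ) ^ 3) ^ #(orientedEdges H) * (1 / (T : ℝ) ^ 3) ^ Fintype.card α / 2) :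
    (𝔼 z, adjKernel G z) / (4 * #(orientedEdges H) ^ 2) ≤
      𝔼 z, cellAverage (P.prod P) (adjKernel G) z *
        dropIndicator (P.prod P) (Q.prod Q) (adjKernel G) z := by
  set m := #(orientedEdges H)
  set κ : ℝ := 1 / T ^ 3 with hκ
  have hm : 0 < m := card_orientedEdges_pos hH
  have hT2 : (2 : ℝ) ≤ T := by exact_mod_cast (by omega : 2 ≤ T)
  have hκ01 : κ ∈ Set.Ioc 0 1 :=
    ⟨by positivity, (div_le_one (by positivity)).2 (one_le_pow₀ (one_le_two.trans hT2))⟩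
  have hmT : (m : ℝ) ≤ T / 8 := by
    rw [le_div_iff₀' (by norm_num)]
    exact_mod_cast hT
  have hPT : (Nat.card (Quotient P) : ℝ) ≤ T := by exact_mod_cast hP
  have hsmall : m * (2 * (Nat.card (Quotient P) * κ) + 4 * κ) ≤ (𝔼 z, adjKernel G z) / 2 :=
    calc m * (2 * (Nat.card (Quotient P) * κ) + 4 * κ) ≤ T / 8 * (2 * (T * κ) + 2 * (T * κ)) := by
          have := hκ01.1.le
          have := mul_le_mul_of_nonneg_right hT2 this
          gcongr ?_ * (2 * (?_ * κ) + ?_)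
          linarith
      _ ≤ 1 / T / 2 := by
          rw [hκ]
          field_simp
          norm_num
      _ ≤ (𝔼 z, adjKernel G z) / 2 := by
          gcongr
          rwa [div_le_iff₀' (by positivity)]
  rw [div_le_iff₀ (by positivity)]
  linarith [hG.expect_adjKernel_le_drop (P := P) hH hκ01 hhom]

lemma IsCore.exists_entropy_increment [Nonempty Ω] (hG : IsCore H G) (hH : H ≠ ⊥) {T : ℕ}
    (hT : 8 * #(orientedEdges H) ≤ T) (hd : 1 ≤ T * 𝔼 z, adjKernel G z)
    (hP : Nat.card (Quotient P) ≤ T)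
    (hhom : homDensity (orientedEdges H) (adjKernel G) <
      1 / (T : ℝ) ^ (3 * (#(orientedEdges H) + Fintype.card α) + 1)) :
    ∃ Q ≤ P, Nat.card (Quotient Q) ≤
        T * 4 ^ T ^ (2 * (3 * (#(orientedEdges H) + Fintype.card α) + 1)) ∧
      entropy (P.prod P) (adjKernel G) +
        (𝔼 z, adjKernel G z) / (16 * #(orientedEdges H) ^ 2) ≤
      entropy (Q.prod Q) (adjKernel G) := by
  set m := #(orientedEdges H)
  set r := 3 * (m + Fintype.card α) + 1 with hr
  have hm : 0 < m := card_orientedEdges_pos hH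
  have hf01 := adjKernel_mem_unitInterval G
  obtain ⟨Q, hQP, hQcard, hQhom⟩ := exists_refinement_abs_homDensity_sub_le
    (fun _ => swap_notMem_orientedEdges (H := H)) hf01 (by omega : 0 < T) r P
  refine ⟨Q, hQP, hQcard.trans (Nat.mul_le_mul_right _ hP), ?_⟩
  have hQsmall : homDensity (orientedEdges H) (cellAverage (Q.prod Q) (adjKernel G)) <
      (1 / (T : ℝ) ^ 3) ^ m * (1 / (T : ℝ) ^ 3) ^ Fintype.card α / 2 := by
    have hpow : (1 / (T : ℝ) ^ 3) ^ m * (1 / (T : ℝ) ^ 3) ^ Fintype.card α = T * (1 / T ^ r) := by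
      have : (T : ℝ) ≠ 0 := by exact_mod_cast (by omega : T ≠ 0)
      rw [← pow_add, one_div_pow, ← pow_mul, hr, pow_succ]
      field_simp
    have hmT : (m + 1) * (1 / (T : ℝ) ^ r) ≤ T / 2 * (1 / T ^ r) := by
      gcongr
      rw [le_div_iff₀ (by norm_num)]
      exact_mod_cast (by omega : (m + 1) * 2 ≤ T)
    linarith [(abs_le.1 hQhom).1]
  have hdrop := hG.div_le_expect_drop hH hT hd hP hQsmall
  have hincr := entropy_add_le_of_le (prod_self_mono hQP) fun z => (hf01 z).1
  refine le_trans ?_ hincr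
  rw [show (16 * m ^ 2 : ℝ) = 4 * m ^ 2 * 4 by ring, ← div_div]
  gcongr

end Increment

/-! ### Towers -/

lemma twr_succ (x : ℕ) : twr (x + 1) = 2 ^ twr x := rfl

lemma twr_strictMono : StrictMono twr :=
  strictMono_nat_of_lt_succ fun _ => Nat.lt_two_pow_self

lemma lt_twr (x : ℕ) : x < twr x := by
  induction x with
  | zero => exact Nat.one_pos
  | succ x ih => exact lt_of_le_of_lt ih (twr_strictMono x.lt_succ_self)

lemma twr_pos (x : ℕ) : 0 < twr x := x.zero_le.trans_lt (lt_twr x)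

lemma succ_mul_self_le_two_pow (n : ℕ) : (n + 1) * n ≤ 2 ^ (n + 1) := by
  induction n with
  | zero => simp
  | succ n ih =>
    have : n + 1 ≤ 2 ^ n := Nat.lt_two_pow_self
    rw [pow_succ] at ih ⊢
    linarith [pow_succ 2 n]

lemma twr_pow_twr_le (x : ℕ) : twr x ^ twr x ≤ twr (x + 2) := by
  obtain ⟨n, hn⟩ : ∃ n, twr x = n + 1 := Nat.exists_eq_add_one.2 (twr_pos x)
  rw [twr_succ, twr_succ, hn]
  calc (n + 1) ^ (n + 1) ≤ (2 ^ n) ^ (n + 1) := Nat.pow_le_pow_left Nat.lt_two_pow_self _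
    _ = 2 ^ ((n + 1) * n) := by rw [← pow_mul, mul_comm]
    _ ≤ 2 ^ 2 ^ (n + 1) := Nat.pow_le_pow_right two_pos (succ_mul_self_le_two_pow n)

lemma twr_mul_four_pow_twr_le (x : ℕ) : twr x * 4 ^ twr x ^ twr x ≤ twr (x + 4) := by
  have hfour : 4 ≤ twr (x + 2) := twr_strictMono.monotone (Nat.le_add_left 2 x)
  have hlt : twr x < twr (x + 2) := twr_strictMono (by omega)
  obtain ⟨n, hn⟩ : ∃ n, twr (x + 2) = n + 1 := Nat.exists_eq_add_one.2 (twr_pos _)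
  rw [twr_succ (x + 3), twr_succ (x + 2)]
  calc twr x * 4 ^ twr x ^ twr x ≤ 2 ^ (n + 1) * 4 ^ (n + 1) := by
        gcongr
        · exact (hn ▸ hlt.le).trans Nat.lt_two_pow_self.le
        · norm_num
        · exact hn ▸ twr_pow_twr_le x
    _ = 2 ^ ((n + 1) * 3) := by rw [← mul_pow, mul_comm (n + 1), pow_mul]; norm_num
    _ ≤ 2 ^ ((n + 1) * n) := by gcongr <;> omega
    _ ≤ 2 ^ 2 ^ twr (x + 2) := by
        rw [hn]
        exact Nat.pow_le_pow_right two_pos (succ_mul_self_le_two_pow n)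

/-! ### Iterating the entropy increment -/

section Iteration

variable {α Ω : Type*} [Fintype α] [Fintype Ω] [Nonempty Ω] {H : SimpleGraph α}
  {G : SimpleGraph Ω} {P : Setoid Ω}

lemma IsCore.le_homDensity_of_lt_entropy (hG : IsCore H G) (hH : H ≠ ⊥) {k x : ℕ}
    (hx : 8 * (#(orientedEdges H) + Fintype.card α) + 2 ≤ twr x)
    (hd : 1 ≤ twr x * 𝔼 z, adjKernel G z) (hP : Nat.card (Quotient P) ≤ twr x)
    (hk : -(k * ((𝔼 z, adjKernel G z) / (16 * #(orientedEdges H) ^ 2))) <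
      entropy (P.prod P) (adjKernel G)) :
    1 / (twr (x + 4 * k) : ℝ) ≤ homDensity (orientedEdges H) (adjKernel G) := by
  induction k generalizing x P with
  | zero =>
    have := entropy_nonpos (P := P.prod P) (adjKernel_mem_unitInterval G)
    simp only [Nat.cast_zero, zero_mul, neg_zero] at hk
    exact absurd this hk.not_ge
  | succ k ih =>
    have hpow {r : ℕ} (hr : r ≤ twr x) : twr x ^ r ≤ twr x ^ twr x :=
      Nat.pow_le_pow_right (twr_pos x) hr
    by_cases hhom : homDensity (orientedEdges H) (adjKernel G) <
      1 / (twr x : ℝ) ^ (3 * (#(orientedEdges H) + Fintype.card α) + 1)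
    · obtain ⟨Q, -, hQ, hent⟩ := hG.exists_entropy_increment hH (by omega) hd hP hhom
      have hmono : twr x ≤ twr (x + 4) := twr_strictMono.monotone (x.le_add_right 4)
      rw [show x + 4 * (k + 1) = x + 4 + 4 * k by ring]
      refine ih (P := Q) (hx.trans hmono) (hd.trans ?_) (hQ.trans ?_) ?_
      · gcongr
        exact expect_nonneg fun z _ => (adjKernel_mem_unitInterval G z).1
      · refine le_trans ?_ (twr_mul_four_pow_twr_le x)
        have := twr_pos x
        gcongr
        · norm_num
        · omega
      · push_cast at hk
        linarith
    · refine le_trans ?_ (not_lt.1 hhom)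
      have := twr_pos x
      gcongr
      exact_mod_cast (hpow (by omega)).trans
        ((twr_pow_twr_le x).trans (twr_strictMono.monotone (by omega)))

lemma IsCore.le_homDensity (hG : IsCore H G) (hH : H ≠ ⊥) {L : ℕ} (hL : 0 < L)
    (hd : 1 ≤ 2 ^ L * 𝔼 z, adjKernel G z) :
    1 / (twr ((8 * (#(orientedEdges H) + Fintype.card α) + 2 + 64 * #(orientedEdges H) ^ 2) * L)
      : ℝ) ≤ homDensity (orientedEdges H) (adjKernel G) := by
  set m := #(orientedEdges H)
  set d := 𝔼 z, adjKernel G z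
  have hm : 0 < m := card_orientedEdges_pos hH
  have hd0 : 0 < d := pos_of_mul_pos_right (one_pos.trans_le hd) (by positivity)
  set x := (8 * (m + Fintype.card α) + 2) * L with hx
  have hLx : L + 1 ≤ x := by nlinarith
  have hpow : 2 ^ L ≤ twr x :=
    calc 2 ^ L ≤ twr (L + 1) := Nat.pow_le_pow_right two_pos (lt_twr L).le
      _ ≤ twr x := twr_strictMono.monotone hLx
  have hlog : -L < Real.log d := by
    have hle : -Real.log d ≤ L * Real.log 2 := by
      rw [← Real.log_pow, ← Real.log_inv]
      exact Real.log_le_log (by positivity) ((inv_le_iff_one_le_mul₀ hd0).2 hd)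
    have : L * Real.log 2 < L := mul_lt_of_lt_one_right (by positivity)
      (Real.log_two_lt_d9.trans (by norm_num))
    linarith
  have hent : -((16 * m ^ 2 * L : ℕ) * (d / (16 * m ^ 2))) <
      entropy ((⊤ : Setoid Ω).prod ⊤) (adjKernel G) := by
    have hk : (16 * m ^ 2 * L : ℕ) * (d / (16 * m ^ 2)) = d * L := by
      push_cast
      field_simp
    rw [show (⊤ : Setoid Ω).prod ⊤ = ⊤ from eq_top_iff.2 fun _ _ _ => ⟨trivial, trivial⟩,
      entropy_top, hk, ← mul_neg]
    exact mul_lt_mul_of_pos_left hlog hd0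
  have hparts : Nat.card (Quotient (⊤ : Setoid Ω)) ≤ twr x :=
    (Finite.card_le_one_iff_subsingleton.2 (Quotient.subsingleton_iff.2 rfl)).trans (twr_pos x)
  have hbound := hG.le_homDensity_of_lt_entropy hH
    ((Nat.le_mul_of_pos_right _ hL).trans (lt_twr x).le)
    (hd.trans (mul_le_mul_of_nonneg_right (by exact_mod_cast hpow) hd0.le)) hparts hent
  convert hbound using 4
  rw [hx]
  ring

end Iteration

/-! ### From homomorphisms to copies -/

section Copies

variable {α Ω : Type*} {H : SimpleGraph α} {G : SimpleGraph Ω}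

lemma copyCount_eq_zero_iff [Finite α] [Finite Ω] : copyCount H G = 0 ↔ H.Free G := by
  rw [copyCount, Nat.card_eq_zero, or_iff_left (not_infinite_iff_finite.2 inferInstance),
    isEmpty_subtype]
  exact ⟨fun h ⟨φ⟩ => h φ ⟨φ.injective, fun _ _ => φ.toHom.map_adj⟩,
    fun h f hf => h ⟨⟨⟨f, @hf.2⟩, hf.1⟩⟩⟩

variable [Fintype α] [Fintype Ω]

lemma copyCount_of_isEmpty [IsEmpty Ω] (H : SimpleGraph α) (G : SimpleGraph Ω) :
    copyCount H G = Fintype.card Ω ^ Fintype.card α := by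
  rw [copyCount, ← Fintype.card_fun, ← Nat.card_eq_fintype_card]
  exact Nat.card_congr <| Equiv.subtypeUnivEquiv fun f =>
    ⟨fun a => isEmptyElim (f a), fun a => isEmptyElim (f a)⟩

lemma card_hom_add_descFactorial_le (H : SimpleGraph α) (G : SimpleGraph Ω) :
    #{x : α → Ω | ∀ ⦃a b⦄, H.Adj a b → G.Adj (x a) (x b)} +
      (Fintype.card Ω).descFactorial (Fintype.card α) ≤
    copyCount H G + Fintype.card Ω ^ Fintype.card α := by
  have hinj : (Fintype.card Ω).descFactorial (Fintype.card α) =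
      #{x : α → Ω | Function.Injective x} := by
    rw [← Fintype.card_embedding_eq, ← Fintype.card_subtype]
    exact (Fintype.card_congr (Equiv.subtypeInjectiveEquivEmbedding α Ω)).symm
  have hcopy : copyCount H G =
      #{x : α → Ω | Function.Injective x ∧ ∀ ⦃a b⦄, H.Adj a b → G.Adj (x a) (x b)} := by
    rw [copyCount, Nat.card_eq_fintype_card, Fintype.card_subtype]
  rw [hinj, hcopy, add_comm, ← card_union_add_card_inter, ← filter_and, add_comm,
    ← Fintype.card_fun]
  exact Nat.add_le_add_left (card_le_univ _) _

lemma pow_mul_one_sub_le_descFactorial {n h : ℕ} (hn : h ≤ n) :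
    (n : ℝ) ^ h * (1 - h ^ 2 / n) ≤ n.descFactorial h := by
  obtain rfl | hpos := n.eq_zero_or_pos
  · simp [Nat.le_zero.1 hn]
  calc (n : ℝ) ^ h * (1 - h ^ 2 / n) = n ^ h * (1 + h * -(h / n : ℝ)) := by ring
    _ ≤ n ^ h * (1 + -(h / n : ℝ)) ^ h := by
        gcongr
        refine one_add_mul_le_pow ?_ h
        have : (h / n : ℝ) ≤ 1 := div_le_one_of_le₀ (by exact_mod_cast hn) n.cast_nonneg
        linarith
    _ = ((n - h : ℕ) : ℝ) ^ h := by
        rw [← mul_pow, Nat.cast_sub hn]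
        field_simp
        ring
    _ ≤ n.descFactorial h := by
        exact_mod_cast (Nat.pow_le_pow_left (by omega) h).trans (Nat.pow_sub_le_descFactorial n h)

lemma pow_le_twr_add_four {n h y : ℕ} (hn : n ≤ 2 * h ^ 2 * twr y) (hy : 2 * h ^ 2 ≤ twr y) :
    n ^ h ≤ twr (y + 4) := by
  have hh : h ≤ twr y := by nlinarith
  have htwo : 2 ≤ twr (y + 2) := twr_strictMono.monotone (show 1 ≤ y + 2 by omega)
  calc n ^ h ≤ (twr y * twr y) ^ h :=
        Nat.pow_le_pow_left (hn.trans (Nat.mul_le_mul_right _ hy)) h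
    _ ≤ (twr y * twr y) ^ twr y :=
        Nat.pow_le_pow_right (Nat.mul_pos (twr_pos y) (twr_pos y)) hh
    _ = (twr y ^ twr y) ^ 2 := by ring
    _ ≤ twr (y + 2) ^ 2 := Nat.pow_le_pow_left (twr_pow_twr_le y) 2
    _ ≤ twr (y + 2) ^ twr (y + 2) := Nat.pow_le_pow_right (twr_pos _) htwo
    _ ≤ twr (y + 4) := twr_pow_twr_le (y + 2)

lemma pow_div_twr_le_copyCount (hpos : 0 < copyCount H G) {y : ℕ}
    (hy : 2 * Fintype.card α ^ 2 ≤ twr y)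
    (hhom : 1 / (twr y : ℝ) ≤ homDensity (orientedEdges H) (adjKernel G)) :
    (Fintype.card Ω : ℝ) ^ Fintype.card α / twr (y + 4) ≤ copyCount H G := by
  set n := Fintype.card Ω
  set h := Fintype.card α
  have hT : (0 : ℝ) < twr y := by exact_mod_cast twr_pos y
  rcases le_total n (2 * h ^ 2 * twr y) with hsmall | hlarge
  · calc (n : ℝ) ^ h / twr (y + 4) ≤ 1 :=
          div_le_one_of_le₀ (by exact_mod_cast pow_le_twr_add_four hsmall hy) (Nat.cast_nonneg _)
      _ ≤ copyCount H G := by exact_mod_cast hpos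
  have hhn : h ≤ n := by nlinarith [twr_pos y]
  have hratio : (h : ℝ) ^ 2 / n ≤ 1 / (2 * twr y) := by
    refine div_le_of_le_mul₀ n.cast_nonneg (by positivity) ?_
    rw [one_div_mul_eq_div, le_div_iff₀ (by positivity)]
    exact_mod_cast (by linarith : h ^ 2 * (2 * twr y) ≤ n)
  have hinj := (mul_le_mul_of_nonneg_left (sub_le_sub_left hratio 1)
    (by positivity : (0 : ℝ) ≤ n ^ h)).trans (pow_mul_one_sub_le_descFactorial hhn)
  have hcard : (#{x : α → Ω | ∀ ⦃a b⦄, H.Adj a b → G.Adj (x a) (x b)} + n.descFactorial h : ℝ) ≤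
      copyCount H G + n ^ h := by
    exact_mod_cast card_hom_add_descFactorial_le H G
  rw [homDensity_orientedEdges] at hhom
  have hhom' := mul_le_of_le_div₀ (Nat.cast_nonneg _) (by positivity) hhom
  have htwo : 2 * twr y ≤ twr (y + 4) :=
    (Nat.mul_le_pow (by norm_num) _).trans (twr_strictMono.monotone (show y + 1 ≤ y + 4 by omega))
  calc (n : ℝ) ^ h / twr (y + 4) ≤ n ^ h / (2 * twr y) := by
        gcongr
        exact_mod_cast htwo
    _ = 1 / twr y * n ^ h + n ^ h * (1 - 1 / (2 * twr y)) - n ^ h := by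
        field_simp
        ring
    _ ≤ copyCount H G := by linarith

end Copies

/-! ### Graphs far from being free of copies -/

section Far

variable {α Ω : Type*} [Fintype Ω] {H : SimpleGraph α} {G : SimpleGraph Ω} {ε : ℝ}

/-- `G` is `ε`-far from being `H`-free: fewer than `ε n²` edge deletions cannot make the `n`-vertex
graph `G` free of `H`. -/
def FarFromFree (H : SimpleGraph α) (G : SimpleGraph Ω) (ε : ℝ) : Prop :=
  ∀ G' ≤ G, H.Free G' → ε * (Fintype.card Ω : ℝ) ^ 2 ≤ ((G.edgeSet \ G'.edgeSet).ncard : ℝ)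

variable [Nonempty Ω]

lemma FarFromFree.copyCount_pos [Finite α] (hG : FarFromFree H G ε) (hε : 0 < ε) :
    0 < copyCount H G := by
  refine Nat.pos_of_ne_zero fun h0 => (hG G le_rfl (copyCount_eq_zero_iff.1 h0)).not_gt ?_
  rw [Set.sdiff_self, Set.ncard_empty, Nat.cast_zero]
  positivity

lemma FarFromFree.exists_isCore [Finite α] (hG : FarFromFree H G ε) (hH : H ≠ ⊥) :
    ∃ G₀ ≤ G, IsCore H G₀ ∧ ε ≤ 𝔼 z, adjKernel G₀ z := by
  obtain ⟨G₀, hle, hfree, hcore⟩ := _root_.exists_isCore hH G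
  refine ⟨G₀, hle, hcore, ?_⟩
  have hedges : ε * (Fintype.card Ω : ℝ) ^ 2 ≤ G₀.edgeSet.ncard := by
    simpa only [SimpleGraph.edgeSet_sdiff, sdiff_sdiff_right_self,
      inf_eq_right.2 (SimpleGraph.edgeSet_subset_edgeSet.2 hle)] using hG _ sdiff_le hfree
  rw [expect_adjKernel, le_div_iff₀ (by positivity)]
  linarith [(G₀.edgeSet.ncard).cast_nonneg (α := ℝ)]

lemma FarFromFree.le_homDensity [Fintype α] (hG : FarFromFree H G ε) {L : ℕ} (hL : 0 < L)
    (hε : 1 ≤ 2 ^ L * ε) :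
    1 / (twr ((8 * (#(orientedEdges H) + Fintype.card α) + 2 + 64 * #(orientedEdges H) ^ 2) * L)
      : ℝ) ≤ homDensity (orientedEdges H) (adjKernel G) := by
  by_cases hH : H = ⊥
  · have hone : homDensity (orientedEdges H) (adjKernel G) = 1 := by
      rw [homDensity_orientedEdges]
      simp [hH]
    rw [hone]
    exact div_le_one_of_le₀ (by exact_mod_cast twr_pos _) (Nat.cast_nonneg _)
  obtain ⟨G₀, hle, hcore, hd⟩ := hG.exists_isCore hH
  exact (hcore.le_homDensity hH hL (hε.trans (by gcongr))).trans (homDensity_adjKernel_mono hle)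

lemma one_le_two_pow_ceil_logb_mul (hε : 0 < ε) : 1 ≤ 2 ^ ⌈Real.logb 2 (1 / ε)⌉₊ * ε := by
  rw [← div_le_iff₀ hε, ← Real.rpow_natCast, ← Real.logb_le_iff_le_rpow one_lt_two (by positivity)]
  exact Nat.le_ceil _

end Far

theorem removal_lemma_general {α : Type*} [Fintype α] (H : SimpleGraph α) :
    ∃ C : ℕ, 0 < C ∧ ∀ ε ∈ Set.Ioo (0 : ℝ) 1, ∀ {Ω : Type*} [Fintype Ω] (G : SimpleGraph Ω),
      FarFromFree H G ε → (Fintype.card Ω : ℝ) ^ Fintype.card α /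
        twr (C * ⌈Real.logb 2 (1 / ε)⌉₊) ≤ copyCount H G := by
  set m := #(orientedEdges H)
  set h := Fintype.card α
  set C₀ := 8 * (m + h) + 2 + 64 * m ^ 2
  refine ⟨C₀ + 2 * h ^ 2 + 4, by omega, fun ε ⟨hε0, hε1⟩ Ω _ G hG => ?_⟩
  set L := ⌈Real.logb 2 (1 / ε)⌉₊
  have hL : 0 < L := Nat.ceil_pos.2 (Real.logb_pos one_lt_two ((one_lt_div hε0).2 hε1))
  cases isEmpty_or_nonempty Ω
  · rw [copyCount_of_isEmpty, Nat.cast_pow]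
    exact div_le_self (by positivity) (by exact_mod_cast twr_pos _)
  set y := C₀ * L + 2 * h ^ 2 with hy
  have hhom : 1 / (twr y : ℝ) ≤ homDensity (orientedEdges H) (adjKernel G) :=
    (one_div_le_one_div_of_le (by exact_mod_cast twr_pos _) (by
      exact_mod_cast twr_strictMono.monotone (Nat.le_add_right _ _))).trans
      (hG.le_homDensity hL (one_le_two_pow_ceil_logb_mul hε0))
  refine le_trans ?_ (pow_div_twr_le_copyCount (hG.copyCount_pos hε0)
    ((Nat.le_add_left _ _).trans (lt_twr y).le) hhom)
  have hheight : y + 4 ≤ (C₀ + 2 * h ^ 2 + 4) * L := by nlinarith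
  have := twr_pos (y + 4)
  gcongr
  exact twr_strictMono.monotone hheight

/-- **Graph removal lemma with tower-of-log bounds.**
For every graph `H` on `h` vertices there is `C = C(H)` such that for every `ε ∈ (0,1)` and
every `n`-vertex graph `G`: if `G` cannot be made `H`-free by deleting fewer than `εn²` edges,
then `G` contains at least `n^h / twr(C·⌈log₂(1/ε)⌉)` copies of `H`. -/
theorem removal_lemma (α : Type) [Fintype α] (H : SimpleGraph α) :
    ∃ C : ℕ, 0 < C ∧
      ∀ ε : ℝ, ε ∈ Set.Ioo (0 : ℝ) 1 →
      ∀ (n : ℕ) (G : SimpleGraph (Fin n)),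
        (∀ G' : SimpleGraph (Fin n), G' ≤ G → copyCount H G' = 0 →
          ε * (n : ℝ) ^ 2 ≤ ((G.edgeSet \ G'.edgeSet).ncard : ℝ)) →
        (n : ℝ) ^ (Fintype.card α) / twr (C * ⌈Real.logb 2 (1 / ε)⌉₊) ≤ copyCount H G := by
  obtain ⟨C, hC, hremoval⟩ := removal_lemma_general H
  refine ⟨C, hC, fun ε hε n G hG => ?_⟩
  simpa only [Fintype.card_fin] using hremoval ε hε G fun G' hle hfree => by
    simpa only [Fintype.card_fin] using hG G' hle (copyCount_eq_zero_iff.2 hfree)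
end
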